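/- Let p be a prime with p ≠ 3 and F a finite extension of ℚ_p, with fixed algebraic closure Ω. If F contains a primitive cube root of unity, then every degree-3 extension of F inside Ω is a Galois (abelian) extension of F. If F does not contain a primitive cube root of unity, then F has exactly 4 extensions of degree 3 inside Ω, exactly one of which is Galois over F. -/

import Mathlib

theorem cube_index_group {A : Type*} [CommGroup A] (B : Subgroup A) [Finite (A ⧸ B)]
    (hinj : ∀ b ∈ B, b ^ 3 = 1 → b = 1) (hsurj : ∀ b ∈ B, ∃ c ∈ B, c ^ 3 = b) :
    (powMonoidHom 3 : A →* A).range.index = Nat.card (powMonoidHom 3 : A →* A).ker := by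
  have h1 : (powMonoidHom 3 : A →* A).range
      = (powMonoidHom 3 : (A ⧸ B) →* (A ⧸ B)).range.comap (QuotientGroup.mk' B) := by
    ext a
    simp only [MonoidHom.mem_range, Subgroup.mem_comap, powMonoidHom_apply]
    constructor
    · rintro ⟨x, rfl⟩
      exact ⟨QuotientGroup.mk' B x, by simp⟩
    · rintro ⟨x, hx⟩
      obtain ⟨y, rfl⟩ := QuotientGroup.mk'_surjective B x
      rw [← map_pow] at hx
      have : (y ^ 3)⁻¹ * a ∈ B := by
        rw [← QuotientGroup.eq]; exact hx
      obtain ⟨c, _, hc⟩ := hsurj _ this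
      exact ⟨y * c, by rw [mul_pow, hc]; simp⟩
  rw [h1, Subgroup.index_comap_of_surjective _ (QuotientGroup.mk'_surjective B),
    Subgroup.index_range]
  symm
  refine Nat.card_congr (Equiv.ofBijective
    (fun x => ⟨QuotientGroup.mk' B x.1, ?_⟩) ⟨?_, ?_⟩)
  · have := x.2
    rw [MonoidHom.mem_ker, powMonoidHom_apply] at this ⊢
    rw [← map_pow, this, map_one]
  · rintro ⟨x, hx⟩ ⟨y, hy⟩ h
    rw [MonoidHom.mem_ker, powMonoidHom_apply] at hx hy
    simp only [Subtype.mk.injEq, QuotientGroup.mk'_apply] at h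
    rw [QuotientGroup.eq] at h
    have := hinj _ h (by rw [mul_pow, inv_pow, hx, hy]; simp)
    simpa [inv_mul_eq_one] using this
  · rintro ⟨x, hx⟩
    obtain ⟨y, rfl⟩ := QuotientGroup.mk'_surjective B x
    rw [MonoidHom.mem_ker, powMonoidHom_apply, ← map_pow, QuotientGroup.mk'_apply,
      QuotientGroup.eq_one_iff] at hx
    obtain ⟨c, hc, hc'⟩ := hsurj _ hx
    refine ⟨⟨y * c⁻¹, ?_⟩, ?_⟩
    · rw [MonoidHom.mem_ker, powMonoidHom_apply, mul_pow, inv_pow, hc']; simp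
    · simp only [Subtype.mk.injEq, map_mul]
      rw [(QuotientGroup.eq_one_iff (N := B) c⁻¹).2 (B.inv_mem hc) |> fun h => (h : QuotientGroup.mk' B c⁻¹ = 1), mul_one]

/-- unit norm subgroup -/
def unitNorm (F : Type*) [NormedField F] : Subgroup Fˣ where
  carrier := {x | ‖(x : F)‖ = 1}
  mul_mem' := by intro a b ha hb; simp_all
  one_mem' := by simp
  inv_mem' := by intro a ha; simp_all

theorem mem_unitNorm {F : Type*} [NormedField F] (x : Fˣ) : x ∈ unitNorm F ↔ ‖(x : F)‖ = 1 := Iff.rfl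

theorem norm_eq_one_of_near {F : Type*} [NormedField F] [IsUltrametricDist F] {x : F}
    (h : ‖x - 1‖ < 1) : ‖x‖ = 1 := by
  have h1 : ‖x - 1 + 1‖ = max ‖x - 1‖ ‖(1:F)‖ :=
    IsUltrametricDist.norm_add_eq_max_of_norm_ne_norm (by rw [norm_one]; exact h.ne)
  rw [sub_add_cancel, norm_one, max_eq_right h.le] at h1
  exact h1

theorem norm_add_lt_one {F : Type*} [NormedField F] [IsUltrametricDist F] {x y : F}
    (h : ‖x‖ < 1) (h' : ‖y‖ < 1) : ‖x + y‖ < 1 :=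
  lt_of_le_of_lt (IsUltrametricDist.norm_add_le_max x y) (max_lt h h')

/-- principal units -/
def princ (F : Type*) [NormedField F] [IsUltrametricDist F] : Subgroup (unitNorm F) where
  carrier := {x | ‖((x : Fˣ) : F) - 1‖ < 1}
  mul_mem' := by
    intro a b ha hb
    have e : (((a * b : unitNorm F) : Fˣ) : F) - 1
      = ((a : Fˣ) : F) * (((b : Fˣ) : F) - 1) + (((a : Fˣ) : F) - 1) := by push_cast; ring
    simp only [Set.mem_ofPred_eq] at *
    rw [e]
    refine norm_add_lt_one ?_ ha
    rw [norm_mul, (mem_unitNorm _).1 a.2, one_mul]; exact hb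
  one_mem' := by simp
  inv_mem' := by
    intro a ha
    have e : (((a⁻¹ : unitNorm F) : Fˣ) : F) - 1
      = -((((a⁻¹ : unitNorm F) : Fˣ) : F) * (((a : Fˣ) : F) - 1)) := by
      rw [mul_sub, mul_one]; simp
    simp only [Set.mem_ofPred_eq] at *
    rw [e, norm_neg, norm_mul, (mem_unitNorm _).1 (a⁻¹).2, one_mul]; exact ha

theorem exists_unif (F : Type*) [NormedField F] [IsUltrametricDist F] [ProperSpace F]
    (hn : ∃ x : F, x ≠ 0 ∧ ‖x‖ < 1) :
    ∃ π : F, π ≠ 0 ∧ ‖π‖ < 1 ∧ ∀ x : F, ‖x‖ < 1 → ‖x‖ ≤ ‖π‖ := by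
  obtain ⟨x, hx, hx1⟩ := hn
  have hc : IsCompact (Metric.ball (0:F) 1) :=
    (isCompact_closedBall (0:F) 1).of_isClosed_subset
      (IsUltrametricDist.isClosed_ball 0 1) Metric.ball_subset_closedBall
  obtain ⟨π, hπ, hm⟩ := hc.exists_isMaxOn ⟨0, by simp⟩ (continuous_norm.continuousOn)
  refine ⟨π, ?_, by simpa using hπ, fun y hy => hm (by simpa using hy)⟩
  rintro rfl
  have := hm (show x ∈ Metric.ball (0:F) 1 by simpa using hx1)
  simp at this
  exact hx this

theorem cube_surj_near (F : Type*) [NormedField F] [IsUltrametricDist F] [ProperSpace F]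
    (hn : ∃ x : F, x ≠ 0 ∧ ‖x‖ < 1) (h3 : ‖(3:F)‖ = 1) (a : F) (ha : ‖a - 1‖ < 1) :
    ∃ x : F, ‖x - 1‖ < 1 ∧ x ^ 3 = a := by
  obtain ⟨π, hπ0, hπ1, hπ⟩ := exists_unif F hn
  have h30 : (3:F) ≠ 0 := by intro h; rw [h] at h3; simp at h3
  let S := Metric.ball (1:F) 1
  have hS : IsComplete S := (IsUltrametricDist.isClosed_ball 1 1).isComplete
  let T : F → F := fun x => x - (x ^ 3 - a) / 3
  have hT : Set.MapsTo T S S := by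
    intro x hx
    simp only [S, mem_ball_iff_norm, T] at *
    have e : x - (x ^ 3 - a) / 3 - 1 = (x - 1) + ((a - 1) + (-((x-1)* (x^2+x+1)))) / 3 := by ring
    have hx2 : ‖x‖ = 1 := norm_eq_one_of_near hx
    rw [e]
    refine norm_add_lt_one hx ?_
    rw [norm_div, h3, div_one]
    refine norm_add_lt_one ha ?_
    rw [norm_neg, norm_mul]
    have : ‖x^2+x+1‖ ≤ 1 := by
      refine (IsUltrametricDist.norm_add_le_max _ _).trans (max_le ?_ (by simp))
      refine (IsUltrametricDist.norm_add_le_max _ _).trans (max_le (by simp [hx2]) hx2.le)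
    calc _ ≤ ‖x - 1‖ * 1 := by gcongr
      _ < 1 := by simpa using hx
  have hcontr : ContractingWith ‖π‖₊ (hT.restrict T S S) := by
    refine ⟨by exact_mod_cast hπ1, LipschitzWith.of_dist_le_mul ?_⟩
    rintro ⟨x, hx⟩ ⟨y, hy⟩
    simp only [Subtype.dist_eq, Set.MapsTo.val_restrict_apply, dist_eq_norm, coe_nnnorm, T]
    simp only [S, mem_ball_iff_norm] at hx hy
    have hx2 : ‖x‖ = 1 := norm_eq_one_of_near hx
    have hy2 : ‖y‖ = 1 := norm_eq_one_of_near hy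
    have e : x - (x ^ 3 - a) / 3 - (y - (y ^ 3 - a) / 3)
      = -(((x - 1) * (x + 1) + (x * (y - 1) + (x - 1)) + (y-1)*(y+1)) / 3) * (x - y) := by
      field_simp; ring
    rw [e, norm_mul]
    gcongr
    apply hπ
    rw [norm_neg, norm_div, h3, div_one]
    have h1 : ∀ z : F, ‖z‖ = 1 → ‖z + 1‖ ≤ 1 := fun z hz =>
      (IsUltrametricDist.norm_add_le_max _ _).trans (max_le hz.le (by simp))
    refine norm_add_lt_one (norm_add_lt_one ?_ (norm_add_lt_one ?_ hx)) ?_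
    · rw [norm_mul]
      calc _ ≤ ‖x - 1‖ * 1 := by gcongr; exact h1 _ hx2
      _ < 1 := by simpa using hx
    · rw [norm_mul, hx2, one_mul]; exact hy
    · rw [norm_mul]
      calc _ ≤ ‖y - 1‖ * 1 := by gcongr; exact h1 _ hy2
      _ < 1 := by simpa using hy
  obtain ⟨y, hyS, hy, -⟩ := hcontr.exists_fixedPoint' hS hT
    (show (1:F) ∈ S by simp [S]) (edist_ne_top _ _)
  refine ⟨y, mem_ball_iff_norm.1 hyS, ?_⟩
  have : y - (y ^ 3 - a) / 3 = y := hy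
  have h4 : (y ^ 3 - a) / 3 = 0 := by linear_combination -this
  rw [div_eq_zero_iff] at h4
  rcases h4 with h4 | h4
  · linear_combination h4
  · exact absurd h4 h30

theorem cube_inj_near (F : Type*) [NormedField F] [IsUltrametricDist F]
    (h3 : ‖(3:F)‖ = 1) (x : F) (hx : ‖x - 1‖ < 1) (h : x ^ 3 = 1) : x = 1 := by
  have e : (x - 1) * (x ^ 2 + x + 1) = 0 := by linear_combination h
  rcases mul_eq_zero.1 e with h | h
  · linear_combination h
  · exfalso
    have e3 : (3:F) = -((x - 1) * (x + 2)) := by linear_combination h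
    have hx2 : ‖x + 2‖ ≤ 1 := by
      have : x + 2 = (x - 1) + 3 := by ring
      rw [this]
      exact (IsUltrametricDist.norm_add_le_max _ _).trans (max_le hx.le h3.le)
    have : ‖(3:F)‖ < 1 := by
      rw [e3, norm_neg, norm_mul]
      calc _ ≤ ‖x - 1‖ * 1 := by gcongr
      _ < 1 := by simpa using hx
    exact this.ne h3

theorem princ_finite (F : Type*) [NormedField F] [IsUltrametricDist F] [ProperSpace F] :
    Finite (unitNorm F ⧸ princ F) := by
  obtain ⟨t, ht, hcov⟩ := (isCompact_closedBall (0:F) 1).finite_cover_balls (e := 1) one_pos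
  have hmem : ∀ q : unitNorm F ⧸ princ F, ∃ y ∈ t, ‖(((q.out : unitNorm F) : Fˣ) : F) - y‖ < 1 := by
    intro q
    have : (((q.out : unitNorm F) : Fˣ) : F) ∈ Metric.closedBall (0:F) 1 := by
      rw [mem_closedBall_iff_norm, sub_zero, (mem_unitNorm _).1 q.out.2]
    have := hcov.2 this
    simpa [dist_eq_norm] using this
  choose f hf hf' using hmem
  have := hcov.1.to_subtype
  refine Finite.of_injective (β := t) (fun q => ⟨f q, hf q⟩) ?_
  intro q r h
  simp only [Subtype.mk.injEq] at h
  rw [← QuotientGroup.out_eq' q, ← QuotientGroup.out_eq' r, QuotientGroup.eq]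
  show ‖((((q.out)⁻¹ * r.out : unitNorm F) : Fˣ) : F) - 1‖ < 1
  have e : ((((q.out)⁻¹ * r.out : unitNorm F) : Fˣ) : F) - 1 =
    ((((q.out)⁻¹ : unitNorm F) : Fˣ) : F) * (((((r.out : unitNorm F) : Fˣ) : F) - f r)
      + -((((q.out : unitNorm F) : Fˣ) : F) - f q)) := by
    rw [h, neg_sub, sub_add_sub_cancel, mul_sub]; simp
  rw [e, norm_mul, (mem_unitNorm _).1 ((q.out)⁻¹).2, one_mul]
  refine norm_add_lt_one (hf' _) ?_
  rw [norm_neg]; exact hf' _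

theorem cube_index_unit (F : Type*) [NormedField F] [IsUltrametricDist F] [ProperSpace F]
    (hn : ∃ x : F, x ≠ 0 ∧ ‖x‖ < 1) (h3 : ‖(3:F)‖ = 1) :
    (powMonoidHom 3 : unitNorm F →* unitNorm F).range.index
      = Nat.card (powMonoidHom 3 : unitNorm F →* unitNorm F).ker := by
  have := princ_finite F
  refine cube_index_group (princ F) ?_ ?_
  · intro b hb h
    have := cube_inj_near F h3 ((b : Fˣ) : F) hb
      (by have := congrArg (fun z : unitNorm F => ((z : Fˣ) : F)) h; simpa using this)
    ext; simpa using this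
  · intro b hb
    obtain ⟨x, hx, hx3⟩ := cube_surj_near F hn h3 ((b : Fˣ) : F) hb
    have hx1 : ‖x‖ = 1 := norm_eq_one_of_near hx
    have hx0 : x ≠ 0 := by rintro rfl; simp at hx1
    refine ⟨⟨Units.mk0 x hx0, hx1⟩, hx, ?_⟩
    ext; simpa using hx3

theorem cube_index_field (F : Type*) [NormedField F] [IsUltrametricDist F] [ProperSpace F]
    (hn : ∃ x : F, x ≠ 0 ∧ ‖x‖ < 1) (h3 : ‖(3:F)‖ = 1) :
    (powMonoidHom 3 : Fˣ →* Fˣ).range.index = 3 * Nat.card (powMonoidHom 3 : Fˣ →* Fˣ).ker := by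
  obtain ⟨π, hπ0, hπ1, hπ⟩ := exists_unif F hn
  have hπp : 0 < ‖π‖ := norm_pos_iff.2 hπ0
  let f : Multiplicative ℤ × unitNorm F →* Fˣ :=
    (zpowersHom Fˣ (Units.mk0 π hπ0)).coprod (unitNorm F).subtype
  have hf : ∀ z, ((f z : Fˣ) : F) = π ^ (z.1.toAdd) * ((z.2 : Fˣ) : F) := by
    intro z; simp [f, zpowersHom_apply]
  have hbij : Function.Bijective f := by
    constructor
    · rw [injective_iff_map_eq_one]
      rintro ⟨n, u⟩ h
      have h1 : π ^ (n.toAdd) * ((u : Fˣ) : F) = 1 := by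
        have := hf (n, u); rw [h] at this; simpa using this.symm
      have h2 := congrArg norm h1
      rw [norm_mul, (mem_unitNorm _).1 u.2, mul_one, norm_one, norm_zpow] at h2
      have h4 : n.toAdd = 0 := by
        exact zpow_right_injective₀ hπp hπ1.ne (by simpa using h2)
      rw [h4, zpow_zero, one_mul] at h1
      ext
      · exact h4
      · simpa using h1
    · intro x
      have hx : 0 < ‖(x:F)‖ := by simp
      obtain ⟨n, hn1, hn2⟩ := exists_mem_Ico_zpow hx ((one_lt_inv₀ hπp).2 hπ1)
      have hy : ‖(x:F) * π ^ (n+1)‖ < 1 := by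
        rw [norm_mul, norm_zpow]
        rw [inv_zpow, ← one_div, lt_div_iff₀ (by positivity)] at hn2
        exact hn2
      have hy1 := hπ _ hy
      have hy2 : ‖(x:F) * π ^ n‖ ≤ 1 := by
        rw [zpow_add_one₀ hπ0, ← mul_assoc, norm_mul _ π] at hy1
        exact le_of_mul_le_mul_right (by simpa using hy1) hπp
      have hy3 : 1 ≤ ‖(x:F) * π ^ n‖ := by
        rw [inv_zpow, ← one_div, div_le_iff₀ (by positivity)] at hn1
        rw [norm_mul, norm_zpow]; exact hn1
      refine ⟨(Multiplicative.ofAdd (-n), ⟨x * (Units.mk0 π hπ0) ^ n, ?_⟩), ?_⟩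
      · rw [mem_unitNorm]; simpa using le_antisymm hy2 hy3
      · ext
        rw [hf]
        simp only [toAdd_ofAdd, Units.val_mul, Units.val_zpow_eq_zpow_val, Units.val_mk0]
        rw [mul_comm, mul_assoc, ← zpow_add₀ hπ0]; simp
  let e := MulEquiv.ofBijective f hbij
  have hr : (powMonoidHom 3 : Fˣ →* Fˣ).range
      = ((powMonoidHom 3 : Multiplicative ℤ →* Multiplicative ℤ).range.prod
        (powMonoidHom 3 : unitNorm F →* unitNorm F).range).map (e : _ →* Fˣ) := by
    ext x
    simp only [MonoidHom.mem_range, Subgroup.mem_map, Subgroup.mem_prod, powMonoidHom_apply]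
    constructor
    · rintro ⟨y, rfl⟩
      obtain ⟨z, rfl⟩ := e.surjective y
      exact ⟨z ^ 3, ⟨⟨z.1, rfl⟩, ⟨z.2, rfl⟩⟩, by simp⟩
    · rintro ⟨⟨z1, z2⟩, ⟨⟨y1, rfl⟩, ⟨y2, rfl⟩⟩, rfl⟩
      exact ⟨e (y1, y2), by rw [← map_pow]; rfl⟩
  rw [hr, Subgroup.index_map_equiv, Subgroup.index_prod, cube_index_unit F hn h3]
  congr 1
  · have : (powMonoidHom 3 : Multiplicative ℤ →* Multiplicative ℤ).range
        = AddSubgroup.toSubgroup (AddSubgroup.zmultiples (3:ℤ)) := by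
      ext x
      rw [MonoidHom.mem_range, show x ∈ AddSubgroup.toSubgroup (AddSubgroup.zmultiples (3:ℤ)) ↔
        x.toAdd ∈ AddSubgroup.zmultiples (3:ℤ) from Iff.rfl, AddSubgroup.mem_zmultiples_iff]
      constructor
      · rintro ⟨y, rfl⟩
        exact ⟨y.toAdd, by simp [mul_comm]⟩
      · rintro ⟨k, hk⟩
        exact ⟨Multiplicative.ofAdd k, by
          apply Multiplicative.toAdd.injective; rw [← hk]; simp [mul_comm]⟩
    rw [this]
    simp
  · refine Nat.card_congr (Equiv.ofBijective
      (fun x => ⟨(x.1 : Fˣ), by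
        have := x.2
        rw [MonoidHom.mem_ker, powMonoidHom_apply] at this ⊢
        exact congrArg Subtype.val this⟩) ⟨?_, ?_⟩)
    · rintro ⟨⟨x, _⟩, _⟩ ⟨⟨y, _⟩, _⟩ h
      simpa using h
    · rintro ⟨x, hx⟩
      rw [MonoidHom.mem_ker, powMonoidHom_apply] at hx
      have : ‖(x:F)‖ = 1 := by
        have := congrArg (fun z : Fˣ => ‖(z : F)‖) hx
        simp only [Units.val_pow_eq_pow_val, norm_pow, Units.val_one, norm_one] at this
        exact (pow_eq_one_iff_of_nonneg (norm_nonneg _) (by norm_num)).1 this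
      exact ⟨⟨⟨x, this⟩, by rw [MonoidHom.mem_ker, powMonoidHom_apply]; ext; simpa using congrArg Units.val hx⟩, rfl⟩

theorem cube_index_padic (p : ℕ) [Fact p.Prime] (hp : p ≠ 3)
    (F : Type*) [Field F] [Algebra ℚ_[p] F] [FiniteDimensional ℚ_[p] F] :
    (powMonoidHom 3 : Fˣ →* Fˣ).range.index = 3 * Nat.card (powMonoidHom 3 : Fˣ →* Fˣ).ker := by
  letI : NormedField F := spectralNorm.normedField ℚ_[p] F
  letI : NormedSpace ℚ_[p] F := spectralNorm.normedSpace ℚ_[p] F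
  haveI : ProperSpace F := FiniteDimensional.proper ℚ_[p] F
  haveI : IsUltrametricDist F := IsUltrametricDist.isUltrametricDist_of_isNonarchimedean_norm
    (isNonarchimedean_spectralNorm (K := ℚ_[p]) (L := F))
  have hext : ∀ k : ℚ_[p], ‖algebraMap ℚ_[p] F k‖ = ‖k‖ := fun k => spectralNorm_extends k
  refine cube_index_field F ⟨algebraMap ℚ_[p] F p, ?_, ?_⟩ ?_
  · rw [map_ne_zero]; exact_mod_cast (Fact.out : p.Prime).ne_zero
  · rw [hext]; exact Padic.norm_p_lt_one
  · have := hext ((3 : ℕ) : ℚ_[p])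
    rw [map_natCast] at this
    rw [show (3:F) = ((3:ℕ):F) by norm_num, this, Padic.norm_natCast_eq_one_iff]
    exact (Nat.coprime_primes (Fact.out) Nat.prime_three).2 hp

open IntermediateField

theorem cube_eq_one_cases {F : Type*} [Field F] {x : F} (h : x ^ 3 = 1) :
    x = 1 ∨ (2 * x + 1) ^ 2 = -3 := by
  have e : (x - 1) * (x ^ 2 + x + 1) = 0 := by linear_combination h
  rcases mul_eq_zero.1 e with h | h
  · left; linear_combination h
  · right; linear_combination 4 * h

theorem prim_of_sqrt {F : Type*} [Field F] [CharZero F] {s : F} (hs : s ^ 2 = -3) :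
    IsPrimitiveRoot ((-1 + s) / 2) 3 := by
  have h3 : ((-1 + s) / 2) ^ 3 = 1 := by
    field_simp; linear_combination (s - 3) * hs
  have h1 : ((-1 + s) / 2) ≠ 1 := by
    intro h
    have : s = 3 := by field_simp at h; linear_combination h
    rw [this] at hs; norm_num at hs
  have := orderOf_eq_prime h3 h1
  rw [← this]; exact IsPrimitiveRoot.orderOf _

theorem sqrt_of_prim {F : Type*} [Field F] {z : F} (hz : IsPrimitiveRoot z 3) :
    (2 * z + 1) ^ 2 = -3 :=
  (cube_eq_one_cases hz.pow_eq_one).resolve_left (hz.ne_one (by norm_num))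

theorem ker_card_three {F : Type*} [Field F] [CharZero F] {s : F} (hs : s ^ 2 = -3) :
    Nat.card (powMonoidHom 3 : Fˣ →* Fˣ).ker = 3 := by
  have h := (prim_of_sqrt hs).card_rootsOfUnity
  have e : (powMonoidHom 3 : Fˣ →* Fˣ).ker = rootsOfUnity 3 F := by
    ext x; simp [MonoidHom.mem_ker, mem_rootsOfUnity]
  rw [e, h]

theorem ker_card_one {F : Type*} [Field F] (hs : ∀ s : F, s ^ 2 ≠ -3) :
    Nat.card (powMonoidHom 3 : Fˣ →* Fˣ).ker = 1 := by
  have e : (powMonoidHom 3 : Fˣ →* Fˣ).ker = ⊥ := by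
    rw [eq_bot_iff]
    intro x hx
    rw [MonoidHom.mem_ker, powMonoidHom_apply] at hx
    have : (x : F) ^ 3 = 1 := by simpa using congrArg Units.val hx
    rcases cube_eq_one_cases this with h | h
    · rw [Subgroup.mem_bot]; ext; simpa using h
    · exact absurd h (hs _)
  rw [e]; simp

section quad
variable {F E : Type*} [Field F] [Field E] [Algebra F E]

theorem quad_mem {e : E} {D : F} (he : e ^ 2 = algebraMap F E D) {x : E} :
    x ∈ F⟮e⟯ ↔ ∃ a b : F, x = algebraMap F E a + algebraMap F E b * e := by
  constructor
  · intro hx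
    have hintg : IsIntegral F e := ⟨Polynomial.X ^ 2 - Polynomial.C D,
      Polynomial.monic_X_pow_sub_C _ (by norm_num), by simp [he]⟩
    induction hx using IntermediateField.adjoin_induction with
    | mem x hx => rw [Set.mem_singleton_iff] at hx; subst hx; exact ⟨0, 1, by simp⟩
    | algebraMap x => exact ⟨x, 0, by simp⟩
    | add x y _ _ hx hy =>
      obtain ⟨a, b, rfl⟩ := hx
      obtain ⟨a', b', rfl⟩ := hy
      exact ⟨a + a', b + b', by simp only [map_add]; ring⟩
    | inv x hx0 hx =>
      obtain ⟨a, b, rfl⟩ := hx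
      by_cases hN : a ^ 2 - b ^ 2 * D = 0
      · have h0 : (algebraMap F E a + algebraMap F E b * e) *
            (algebraMap F E a - algebraMap F E b * e) = 0 := by
          have := congrArg (algebraMap F E) hN
          simp only [map_sub, map_mul, map_pow, map_zero] at this
          linear_combination this - (algebraMap F E b) ^ 2 * he
        rcases mul_eq_zero.1 h0 with h | h
        · rw [h]; exact ⟨0, 0, by simp⟩
        · have e1 : algebraMap F E a + algebraMap F E b * e = algebraMap F E (2 * a) := by
            simp only [map_mul, map_ofNat]
            linear_combination -h
          rw [e1, ← map_inv₀]
          exact ⟨(2 * a)⁻¹, 0, by simp⟩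
      · refine ⟨a / (a ^ 2 - b ^ 2 * D), -b / (a ^ 2 - b ^ 2 * D), ?_⟩
        have hN' : algebraMap F E (a ^ 2 - b ^ 2 * D) ≠ 0 := (map_ne_zero _).2 hN
        apply inv_eq_of_mul_eq_one_right
        rw [map_div₀, map_div₀]
        field_simp
        simp only [map_sub, map_mul, map_pow, map_neg]
        linear_combination -(algebraMap F E b) ^ 2 * he
    | mul x y _ _ hx hy =>
      obtain ⟨a, b, rfl⟩ := hx
      obtain ⟨a', b', rfl⟩ := hy
      refine ⟨a * a' + b * b' * D, a * b' + a' * b, ?_⟩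
      simp only [map_add, map_mul]
      linear_combination (algebraMap F E b) * algebraMap F E b' * he
  · rintro ⟨a, b, rfl⟩
    exact add_mem (IntermediateField.algebraMap_mem _ _)
      (mul_mem (IntermediateField.algebraMap_mem _ _) (mem_adjoin_simple_self F e))

theorem quad_unique {e : E} (hne : ∀ c : F, algebraMap F E c ≠ e) {a b a' b' : F}
    (h : algebraMap F E a + algebraMap F E b * e = algebraMap F E a' + algebraMap F E b' * e) :
    a = a' ∧ b = b' := by
  have hb : b = b' := by
    by_contra hb
    have hb' : algebraMap F E (b - b') ≠ 0 := by simpa [sub_eq_zero] using hb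
    apply hne ((a' - a) / (b - b'))
    rw [map_div₀, div_eq_iff hb']
    simp only [map_sub]
    linear_combination -h
  subst hb
  exact ⟨(algebraMap F E).injective (by linear_combination h), rfl⟩

theorem quad_integral {e : E} {D : F} (he : e ^ 2 = algebraMap F E D) : IsIntegral F e :=
  ⟨Polynomial.X ^ 2 - Polynomial.C D,
      Polynomial.monic_X_pow_sub_C _ (by norm_num), by simp [he]⟩

theorem quad_finrank {e : E} {D : F} (he : e ^ 2 = algebraMap F E D)
    (hne : ∀ c : F, algebraMap F E c ≠ e) : Module.finrank F F⟮e⟯ = 2 := by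
  rw [adjoin.finrank (quad_integral he)]
  apply le_antisymm
  · have := minpoly.min F e (Polynomial.monic_X_pow_sub_C D (by norm_num : 2 ≠ 0)) (by simp [he])
    have := Polynomial.natDegree_le_natDegree this
    simpa using this
  · rw [minpoly.two_le_natDegree_iff (quad_integral he)]
    rintro ⟨c, hc⟩
    exact hne c hc

theorem quad_norm {e : E} {D : F} (he : e ^ 2 = algebraMap F E D)
    (hne : ∀ c : F, algebraMap F E c ≠ e) :
    ∃ N : F⟮e⟯ →* F, ∀ (x : F⟮e⟯) (a b : F), (x : E) = algebraMap F E a + algebraMap F E b * e →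
      N x = a ^ 2 - b ^ 2 * D := by
  have h : ∀ x : F⟮e⟯, ∃ a b : F, (x : E) = algebraMap F E a + algebraMap F E b * e :=
    fun x => (quad_mem he).1 x.2
  choose f g hfg using h
  have key : ∀ (x : F⟮e⟯) (a b : F), (x : E) = algebraMap F E a + algebraMap F E b * e →
      f x = a ∧ g x = b := fun x a b hx => quad_unique hne ((hfg x).symm.trans hx)
  refine ⟨⟨⟨fun x => f x ^ 2 - g x ^ 2 * D, ?_⟩, ?_⟩, ?_⟩
  · obtain ⟨h1, h2⟩ := key 1 1 0 (by simp)
    rw [h1, h2]; ring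
  · intro x y
    obtain ⟨h1, h2⟩ := key (x * y) (f x * f y + g x * g y * D) (f x * g y + f y * g x) (by
      simp only [map_add, map_mul, MulMemClass.coe_mul]
      rw [hfg x, hfg y]
      linear_combination (algebraMap F E (g x)) * algebraMap F E (g y) * he)
    simp only [h1, h2]
    ring
  · intro x a b hx
    obtain ⟨h1, h2⟩ := key x a b hx
    simp [h1, h2]

/-- an element of the base which is a cube upstairs is a cube -/
theorem quad_cube {e : E} {D : F} (he : e ^ 2 = algebraMap F E D)
    (hne : ∀ c : F, algebraMap F E c ≠ e) (c : Fˣ) (y : F⟮e⟯)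
    (h : algebraMap F F⟮e⟯ c = y ^ 3) : ∃ z : Fˣ, z ^ 3 = c := by
  obtain ⟨N, hN⟩ := quad_norm he hne
  have h1 : N (algebraMap F F⟮e⟯ c) = (c : F) ^ 2 := by
    rw [hN _ (c : F) 0 (by simp)]; ring
  rw [h, map_pow] at h1
  have hc : (c : F) ≠ 0 := c.ne_zero
  have hN0 : N y ≠ 0 := by
    intro h0; rw [h0] at h1; exact hc (by simpa using h1.symm)
  refine ⟨c * (Units.mk0 _ hN0)⁻¹, ?_⟩
  ext
  simp only [Units.val_pow_eq_pow_val, Units.val_mul, Units.val_inv_eq_inv_val, Units.val_mk0]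
  field_simp
  exact h1.symm

theorem cube_rep {e : E} {D : F} (he : e ^ 2 = algebraMap F E D)
    (hne : ∀ c : F, algebraMap F E c ≠ e)
    (h1 : (powMonoidHom 3 : Fˣ →* Fˣ).range.index = 9)
    (h2 : (powMonoidHom 3 : F⟮e⟯ˣ →* F⟮e⟯ˣ).range.index = 9)
    (x : E) (hx : x ∈ F⟮e⟯) (hx0 : x ≠ 0) :
    ∃ c a b : F, c ≠ 0 ∧
      x = algebraMap F E c * (algebraMap F E a + algebraMap F E b * e) ^ 3 := by
  let R := (powMonoidHom 3 : Fˣ →* Fˣ).range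
  let R' := (powMonoidHom 3 : F⟮e⟯ˣ →* F⟮e⟯ˣ).range
  let i : Fˣ →* F⟮e⟯ˣ := Units.map (algebraMap F F⟮e⟯)
  have hle : R ≤ R'.comap i := by
    rintro _ ⟨y, rfl⟩
    exact ⟨i y, by simp⟩
  let φ : Fˣ ⧸ R →* F⟮e⟯ˣ ⧸ R' := QuotientGroup.map R R' i hle
  have hinj : Function.Injective φ := by
    rw [injective_iff_map_eq_one]
    intro q hq
    obtain ⟨c, rfl⟩ := QuotientGroup.mk'_surjective R q
    have hq' : ((i c : F⟮e⟯ˣ) : F⟮e⟯ˣ ⧸ R') = 1 := hq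
    rw [QuotientGroup.eq_one_iff] at hq'
    obtain ⟨y, hy⟩ := hq'
    obtain ⟨z, hz⟩ := quad_cube he hne c (y : F⟮e⟯) (by
      have := congrArg Units.val hy
      simpa [i] using this.symm)
    exact (QuotientGroup.eq_one_iff (N := R) c).2 ⟨z, hz⟩
  have : Finite (F⟮e⟯ˣ ⧸ R') := Nat.finite_of_card_ne_zero (by
    rw [← Subgroup.index_eq_card, h2]; norm_num)
  have hbij := hinj.bijective_of_nat_card_le (by
    rw [← Subgroup.index_eq_card, ← Subgroup.index_eq_card, h1, h2])
  let x' : F⟮e⟯ˣ := Units.mk0 ⟨x, hx⟩ (by simpa [Subtype.ext_iff] using hx0)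
  obtain ⟨q, hq⟩ := hbij.2 (QuotientGroup.mk' R' x')
  obtain ⟨c, rfl⟩ := QuotientGroup.mk'_surjective R q
  have hq' : ((i c : F⟮e⟯ˣ) : F⟮e⟯ˣ ⧸ R') = x' := hq
  rw [QuotientGroup.eq] at hq'
  obtain ⟨y, hy⟩ := hq'
  obtain ⟨a, b, hab⟩ := (quad_mem he).1 (y : F⟮e⟯).2
  refine ⟨c, a, b, c.ne_zero, ?_⟩
  rw [← hab]
  have h3 : x' = i c * y ^ 3 := by rw [powMonoidHom_apply] at hy; rw [hy]; simp
  have := congrArg (fun z : F⟮e⟯ˣ => ((z : F⟮e⟯) : E)) h3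
  simpa [x', i] using this

theorem group_three {G : Type*} [Group G] (h : Nat.card G = 3) :
    ∃ g : G, g ≠ 1 ∧ ∀ x : G, ∃ i : ℕ, i < 3 ∧ x = g ^ i := by
  have : Finite G := Nat.finite_of_card_ne_zero (by rw [h]; norm_num)
  have hnt : Nontrivial G := Finite.one_lt_card_iff_nontrivial.1 (by rw [h]; norm_num)
  obtain ⟨g, hg⟩ := exists_ne (1 : G)
  haveI : Fact (Nat.Prime 3) := ⟨Nat.prime_three⟩
  refine ⟨g, hg, fun x => ?_⟩
  obtain ⟨n, hn⟩ := mem_powers_of_prime_card h hg (g' := x)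
  refine ⟨n % 3, Nat.mod_lt _ (by norm_num), ?_⟩
  rw [← h, pow_mod_natCard]; exact hn.symm

theorem base_three (h1 : (powMonoidHom 3 : Fˣ →* Fˣ).range.index = 3) :
    ∃ π : F, π ≠ 0 ∧ (∀ y : F, y ^ 3 ≠ π) ∧
      ∀ x : F, x ≠ 0 → ∃ i : ℕ, i < 3 ∧ ∃ y : F, x = π ^ i * y ^ 3 := by
  rw [Subgroup.index_eq_card] at h1
  obtain ⟨g, hg, hall⟩ := group_three h1
  obtain ⟨π, rfl⟩ := QuotientGroup.mk'_surjective _ g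
  refine ⟨π, π.ne_zero, ?_, ?_⟩
  · intro y hy
    apply hg
    have hy0 : y ≠ 0 := by rintro rfl; apply π.ne_zero; rw [← hy]; norm_num
    exact (QuotientGroup.eq_one_iff _).2 ⟨Units.mk0 y hy0, by ext; simpa using hy⟩
  · intro x hx
    obtain ⟨i, hi, hx'⟩ := hall (QuotientGroup.mk' _ (Units.mk0 x hx))
    rw [← map_pow] at hx'
    have := QuotientGroup.eq.1 hx'.symm
    obtain ⟨y, hy⟩ := this
    refine ⟨i, hi, y, ?_⟩
    have h3 : Units.mk0 x hx = π ^ i * y ^ 3 := by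
      rw [powMonoidHom_apply] at hy; rw [hy]; simp
    simpa using congrArg Units.val h3

theorem ker_three {e : E} {D : F} (he : e ^ 2 = algebraMap F E D)
    (hne : ∀ c : F, algebraMap F E c ≠ e)
    (h1 : (powMonoidHom 3 : Fˣ →* Fˣ).range.index = 3)
    (h2 : (powMonoidHom 3 : F⟮e⟯ˣ →* F⟮e⟯ˣ).range.index = 9) :
    ∃ A B c : F, c ≠ 0 ∧ A ^ 2 - B ^ 2 * D = c ^ 3 ∧
      (∀ y ∈ F⟮e⟯, y ^ 3 ≠ algebraMap F E A + algebraMap F E B * e) ∧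
      ∀ a b z : F, z ≠ 0 → a ^ 2 - b ^ 2 * D = z ^ 3 →
        ∃ i : ℕ, ∃ y ∈ F⟮e⟯, algebraMap F E a + algebraMap F E b * e
          = (algebraMap F E A + algebraMap F E B * e) ^ i * y ^ 3 := by
  obtain ⟨N, hN⟩ := quad_norm he hne
  let R := (powMonoidHom 3 : Fˣ →* Fˣ).range
  let R' := (powMonoidHom 3 : F⟮e⟯ˣ →* F⟮e⟯ˣ).range
  let n : F⟮e⟯ˣ →* Fˣ := Units.map N
  have hle : R' ≤ R.comap n := by
    rintro _ ⟨y, rfl⟩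
    exact ⟨n y, by simp⟩
  let ψ : F⟮e⟯ˣ ⧸ R' →* Fˣ ⧸ R := QuotientGroup.map R' R n hle
  have hsurj : Function.Surjective ψ := by
    intro q
    obtain ⟨c, rfl⟩ := QuotientGroup.mk'_surjective R q
    refine ⟨QuotientGroup.mk' R' (Units.map (algebraMap F F⟮e⟯) (c ^ 2)), ?_⟩
    show ((n (Units.map (algebraMap F F⟮e⟯) (c ^ 2)) : Fˣ) : Fˣ ⧸ R) = (c : Fˣ ⧸ R)
    rw [QuotientGroup.eq]
    refine ⟨c⁻¹, ?_⟩
    have : n (Units.map (algebraMap F F⟮e⟯) (c ^ 2)) = c ^ 4 := by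
      ext
      simp only [n, Units.coe_map, MonoidHom.coe_coe, Units.val_pow_eq_pow_val]
      rw [hN _ ((c : F) ^ 2) 0 (by simp)]; ring
    rw [this, powMonoidHom_apply]
    rw [eq_inv_mul_iff_mul_eq, inv_pow, mul_inv_eq_iff_eq_mul]
    rw [← pow_succ']
  have hcard : Nat.card ψ.ker = 3 := by
    have h3 := ψ.ker.card_mul_index
    rw [Subgroup.index_ker, MonoidHom.range_eq_top.2 hsurj, Subgroup.card_top,
      ← Subgroup.index_eq_card, ← Subgroup.index_eq_card, h1, h2] at h3
    omega
  obtain ⟨g, hg, hall⟩ := group_three hcard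
  obtain ⟨b, hb⟩ := QuotientGroup.mk'_surjective R' g.1
  obtain ⟨A, B, hAB⟩ := (quad_mem he).1 (b : F⟮e⟯).2
  have hker : ∀ x : F⟮e⟯ˣ, QuotientGroup.mk' R' x ∈ ψ.ker ↔ ∃ c : Fˣ, c ^ 3 = n x := by
    intro x
    rw [MonoidHom.mem_ker]
    show ((n x : Fˣ) : Fˣ ⧸ R) = 1 ↔ _
    rw [QuotientGroup.eq_one_iff]
    rfl
  obtain ⟨c, hc⟩ := (hker b).1 (by rw [hb]; exact g.2)
  refine ⟨A, B, c, c.ne_zero, ?_, ?_, ?_⟩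
  · rw [← hN _ A B hAB]
    simpa [n] using (congrArg Units.val hc).symm
  · intro y hy h
    apply hg
    have hy0 : (⟨y, hy⟩ : F⟮e⟯) ≠ 0 := by
      intro h0
      have h0' : y = 0 := congrArg Subtype.val h0
      rw [h0', ← hAB] at h
      have : ((b : F⟮e⟯) : E) ≠ 0 := by simp
      apply this; rw [← h]; norm_num
    ext1
    rw [← hb]
    refine (QuotientGroup.eq_one_iff _).2 ⟨Units.mk0 _ hy0, ?_⟩
    ext
    simpa [hAB] using h
  · intro a' b' z hz h
    have hx : algebraMap F E a' + algebraMap F E b' * e ∈ F⟮e⟯ := (quad_mem he).2 ⟨_, _, rfl⟩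
    have hNx := hN ⟨_, hx⟩ a' b' rfl
    have hx0 : (⟨_, hx⟩ : F⟮e⟯) ≠ 0 := by
      intro h0
      have : algebraMap F E a' + algebraMap F E b' * e
        = algebraMap F E 0 + algebraMap F E 0 * e := by
        have := congrArg Subtype.val h0; simpa using this
      obtain ⟨ha, hb⟩ := quad_unique hne this
      rw [ha, hb] at h
      apply hz
      have : z ^ 3 = 0 := by rw [← h]; ring
      simpa using this
    have hmem := (hker (Units.mk0 _ hx0)).2 ⟨Units.mk0 z hz, by ext; simp [n, hNx, h]⟩
    obtain ⟨i, _, hi⟩ := hall ⟨_, hmem⟩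
    have hi' := congrArg Subtype.val hi
    simp only [SubmonoidClass.coe_pow] at hi'
    rw [← hb, ← map_pow] at hi'
    obtain ⟨y, hy⟩ := QuotientGroup.eq.1 hi'.symm
    refine ⟨i, ((y : F⟮e⟯) : E), (y : F⟮e⟯).2, ?_⟩
    rw [← hAB]
    have h3 : Units.mk0 _ hx0 = b ^ i * y ^ 3 := by
      rw [powMonoidHom_apply] at hy; rw [hy]; simp
    simpa using congrArg (fun z : F⟮e⟯ˣ => ((z : F⟮e⟯) : E)) h3

end quad

open IntermediateField

section cubic
variable {F E : Type*} [Field F] [Field E] [Algebra F E]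

theorem cube_eq_cases [CharZero E] {S x y : E} (hS : S ^ 2 = -3) (h : x ^ 3 = y ^ 3) :
    x = y ∨ x = (-1 + S) / 2 * y ∨ x = (-1 - S) / 2 * y := by
  have e : (x - y) * ((x - (-1 + S) / 2 * y) * (x - (-1 - S) / 2 * y)) = 0 := by
    field_simp
    linear_combination 4 * h - (x - y) * y ^ 2 * hS
  rcases mul_eq_zero.1 e with h | h
  · left; linear_combination h
  · rcases mul_eq_zero.1 h with h | h
    · right; left; linear_combination h
    · right; right; linear_combination h

theorem ofNat_mem' (M : IntermediateField F E) (n : ℕ) [n.AtLeastTwo] : (OfNat.ofNat n : E) ∈ M := by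
  have := IntermediateField.natCast_mem M n
  simpa using this

theorem cube_mem [CharZero E] (M : IntermediateField F E) {S x y : E} (hS : S ^ 2 = -3)
    (hSM : S ∈ M) (hy : y ∈ M) (h : x ^ 3 = y ^ 3) : x ∈ M := by
  rcases cube_eq_cases hS h with h | h | h
  · rw [h]; exact hy
  · rw [h]
    exact mul_mem (div_mem (add_mem (neg_mem (one_mem _)) hSM) (ofNat_mem' M 2)) hy
  · rw [h]
    exact mul_mem (div_mem (sub_mem (neg_mem (one_mem _)) hSM) (ofNat_mem' M 2)) hy

theorem disc_sq {α p q d : E} (hα : α ^ 3 + p * α + q = 0) (hd : d ^ 2 = -3 * α ^ 2 - 4 * p) :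
    (d * (3 * α ^ 2 + p)) ^ 2 = -4 * p ^ 3 - 27 * q ^ 2 := by
  linear_combination (3 * α ^ 2 + p) ^ 2 * hd - 27 * (α ^ 3 + p * α - q) * hα

theorem u_cube [CharZero E] {α p q d S : E} (hS : S ^ 2 = -3) (hα : α ^ 3 + p * α + q = 0)
    (hd : d ^ 2 = -3 * α ^ 2 - 4 * p) :
    ((3 * α + S * d) / 2) ^ 3 = -27 * q / 2 + 3 * S / 2 * (d * (3 * α ^ 2 + p)) := by
  field_simp
  linear_combination (9 * α * d ^ 2 + S * d ^ 3) * hS - 27 * α * hd -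
    3 * S * d * hd + 108 * hα

theorem uv_mul [CharZero E] {α p d S : E} (hS : S ^ 2 = -3)
    (hd : d ^ 2 = -3 * α ^ 2 - 4 * p) :
    ((3 * α + S * d) / 2) * ((3 * α - S * d) / 2) = -3 * p := by
  field_simp
  linear_combination -d ^ 2 * hS + 3 * hd

theorem core [CharZero F] [CharZero E] (hrep : ∀ (e : E) (D : F), e ^ 2 = algebraMap F E D →
      (∀ c : F, algebraMap F E c ≠ e) → ∀ x ∈ F⟮e⟯, x ≠ 0 → ∃ c a b : F, c ≠ 0 ∧
      x = algebraMap F E c * (algebraMap F E a + algebraMap F E b * e) ^ 3)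
    {s p q : F} (hs : s ^ 2 = -3) {α d : E}
    (hα : α ^ 3 + algebraMap F E p * α + algebraMap F E q = 0)
    (hd : d ^ 2 = -3 * α ^ 2 - 4 * algebraMap F E p)
    (hδ : ∀ c : F, algebraMap F E c ≠ d * (3 * α ^ 2 + algebraMap F E p)) :
    α ∈ F⟮d * (3 * α ^ 2 + algebraMap F E p)⟯ := by
  have hS : (algebraMap F E s) ^ 2 = -3 := by rw [← map_pow, hs]; simp [map_ofNat]
  have h2 := disc_sq hα hd
  have hu := u_cube hS hα hd
  have huv := uv_mul hS hd
  set δ := d * (3 * α ^ 2 + algebraMap F E p) with hδdef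
  set S := algebraMap F E s with hSdef
  set u := (3 * α + S * d) / 2 with hudef
  set v := (3 * α - S * d) / 2 with hvdef
  have hδ2 : δ ^ 2 = algebraMap F E (-4 * p ^ 3 - 27 * q ^ 2) := by rw [h2]; simp [map_ofNat]
  have hp : p ≠ 0 := by
    rintro rfl
    have : (δ - algebraMap F E (3 * s * q)) * (δ - algebraMap F E (-(3 * s * q))) = 0 := by
      simp only [map_mul, map_neg, map_ofNat, ← hSdef]
      simp only [map_zero] at h2
      linear_combination h2 - 9 * (algebraMap F E q) ^ 2 * hS
    rcases mul_eq_zero.1 this with h | h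
    · exact hδ _ (sub_eq_zero.1 h).symm
    · exact hδ _ (sub_eq_zero.1 h).symm
  have hpE : algebraMap F E p ≠ 0 := by simpa using hp
  have huv0 : u * v ≠ 0 := by rw [huv]; simpa using hp
  have hu0 : u ≠ 0 := left_ne_zero_of_mul huv0
  have hu' : u ^ 3 = algebraMap F E (-27 * q / 2) + algebraMap F E (3 * s / 2) * δ := by
    rw [hu]; simp [hSdef, map_ofNat]
  obtain ⟨c, a, b, hc, habc⟩ := hrep δ _ hδ2 hδ (u ^ 3) ((quad_mem hδ2).2 ⟨_, _, hu'⟩)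
    (pow_ne_zero _ hu0)
  set D := -4 * p ^ 3 - 27 * q ^ 2 with hD
  have hcmp : algebraMap F E (-27 * q / 2) + algebraMap F E (3 * s / 2) * δ
    = algebraMap F E (c * (a ^ 3 + 3 * a * b ^ 2 * D))
      + algebraMap F E (c * (3 * a ^ 2 * b + b ^ 3 * D)) * δ := by
    rw [← hu', habc]
    simp only [map_mul, map_add, map_pow, map_ofNat]
    linear_combination (algebraMap F E c * (3 * algebraMap F E a * (algebraMap F E b) ^ 2
      + (algebraMap F E b) ^ 3 * δ)) * hδ2
  obtain ⟨e1, e2⟩ := quad_unique hδ hcmp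
  have hn : c ^ 2 * (a ^ 2 - b ^ 2 * D) ^ 3 = (-3 * p) ^ 3 := by
    have : (-27 * q / 2) ^ 2 - (3 * s / 2) ^ 2 * D = (-3 * p) ^ 3 := by
      rw [hD]; field_simp; linear_combination (-9 * (-4 * p ^ 3 - 27 * q ^ 2)) * hs
    rw [← this, e1, e2]; ring
  have hz : (c * (a ^ 2 - b ^ 2 * D) / (-3 * p)) ^ 3 = c := by
    rw [div_pow, mul_pow, div_eq_iff (by simpa using hp), ← hn]; ring
  have hmem : u ∈ F⟮δ⟯ := by
    refine cube_mem F⟮δ⟯ hS (IntermediateField.algebraMap_mem _ _)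
      (y := algebraMap F E (c * (a ^ 2 - b ^ 2 * D) / (-3 * p)) *
        (algebraMap F E a + algebraMap F E b * δ)) ?_ ?_
    · exact mul_mem (IntermediateField.algebraMap_mem _ _) ((quad_mem hδ2).2 ⟨_, _, rfl⟩)
    · rw [mul_pow, ← map_pow, hz]; exact habc
  have hv : v = -3 * algebraMap F E p / u := by rw [eq_div_iff hu0, mul_comm]; exact huv
  have hvmem : v ∈ F⟮δ⟯ := by
    rw [hv]
    exact div_mem (mul_mem (neg_mem (ofNat_mem' _ 3)) (IntermediateField.algebraMap_mem _ _)) hmem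
  have : α = (u + v) / 3 := by rw [hudef, hvdef]; field_simp; ring
  rw [this]
  exact div_mem (add_mem hmem hvmem) (ofNat_mem' _ 3)

theorem fin_of_three {L : IntermediateField F E} (hL : Module.finrank F L = 3) :
    FiniteDimensional F L := Module.finite_of_finrank_pos (by rw [hL]; norm_num)

theorem adjoin_eq_three {L : IntermediateField F E} (hL : Module.finrank F L = 3) {x : E}
    (hx : x ∈ L) (hxF : ∀ c : F, algebraMap F E c ≠ x) : F⟮x⟯ = L := by
  have := fin_of_three hL
  have hle : F⟮x⟯ ≤ L := adjoin_simple_le_iff.2 hx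
  have hd := finrank_dvd_of_le_right hle
  rw [hL] at hd
  rcases (Nat.dvd_prime Nat.prime_three).1 hd with h | h
  · rw [finrank_adjoin_simple_eq_one_iff, mem_bot] at h
    obtain ⟨c, hc⟩ := h
    exact absurd hc (hxF c)
  · exact eq_of_le_of_finrank_eq hle (h.trans hL.symm)

theorem sq_mem_three {L : IntermediateField F E} (hL : Module.finrank F L = 3) {e : E} {D : F}
    (he : e ^ 2 = algebraMap F E D) (hx : e ∈ L) : ∃ c : F, algebraMap F E c = e := by
  by_contra hne
  push Not at hne
  have h1 := adjoin_eq_three hL hx hne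
  have h2 := quad_finrank he hne
  rw [h1] at h2; omega

theorem not_mem_quad {L : IntermediateField F E} (hL : Module.finrank F L = 3) {x : E}
    (hx : x ∈ L) (hxF : ∀ c : F, algebraMap F E c ≠ x) {e : E} {D : F}
    (he : e ^ 2 = algebraMap F E D) : x ∉ F⟮e⟯ := by
  intro hmem
  by_cases hne : ∀ c : F, algebraMap F E c ≠ e
  · have h1 := adjoin_eq_three hL hx hxF
    have h2 := finrank_dvd_of_le_right (adjoin_simple_le_iff.2 hmem)
    rw [h1, hL, quad_finrank he hne] at h2
    omega
  · push Not at hne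
    obtain ⟨c, hc⟩ := hne
    obtain ⟨a, b, hab⟩ := (quad_mem he).1 hmem
    apply hxF (a + b * c)
    rw [hab, ← hc]; simp

theorem exists_cubic [CharZero F] {L : IntermediateField F E} (hL : Module.finrank F L = 3) :
    ∃ (α : E) (p q : F), α ∈ L ∧ (∀ c : F, algebraMap F E c ≠ α) ∧
      α ^ 3 + algebraMap F E p * α + algebraMap F E q = 0 := by
  have := fin_of_three hL
  have hne : L ≠ ⊥ := by rintro rfl; simp at hL
  obtain ⟨x, hx, hxF⟩ : ∃ x ∈ L, ∀ c : F, algebraMap F E c ≠ x := by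
    by_contra h
    push Not at h
    exact hne (eq_bot_iff.2 fun x hx => mem_bot.2 (h x hx))
  have h1 := adjoin_eq_three hL hx hxF
  have hintg : IsIntegral F x :=
    (isIntegral_iff (S := L) (x := ⟨x, hx⟩)).1 (Algebra.IsIntegral.isIntegral _)
  have hdeg : (minpoly F x).natDegree = 3 := by
    rw [← adjoin.finrank hintg, h1, hL]
  have hm := minpoly.aeval F x
  have hlead := minpoly.monic hintg
  rw [Polynomial.Monic, Polynomial.leadingCoeff, hdeg] at hlead
  rw [Polynomial.aeval_eq_sum_range, hdeg] at hm
  simp only [Finset.sum_range_succ, Finset.sum_range_zero, hlead, Algebra.smul_def] at hm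
  set a := (minpoly F x).coeff 2
  set b := (minpoly F x).coeff 1
  set c := (minpoly F x).coeff 0
  refine ⟨x + algebraMap F E (a / 3), b - a ^ 2 / 3, c - a * b / 3 + 2 * a ^ 3 / 27,
    add_mem hx (IntermediateField.algebraMap_mem _ _), ?_, ?_⟩
  · intro z hz
    apply hxF (z - a / 3)
    rw [map_sub, hz]; ring
  · have h3 : (3 : E) ≠ 0 := by
      have : algebraMap F E 3 ≠ 0 := (map_ne_zero _).2 (by norm_num)
      rwa [map_ofNat] at this
    have h27 : (27 : E) ≠ 0 := by
      have : algebraMap F E 27 ≠ 0 := (map_ne_zero _).2 (by norm_num)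
      rwa [map_ofNat] at this
    simp only [map_sub, map_add, map_div₀, map_mul, map_pow, map_ofNat, map_one] at *
    have e27 : (27 : E) = 3 ^ 3 := by norm_num
    rw [e27]
    field_simp
    linear_combination 27 * hm

theorem cubic_finrank {α : E} {p q : F}
    (hα : α ^ 3 + algebraMap F E p * α + algebraMap F E q = 0)
    (hno : ∀ r : F, r ^ 3 + p * r + q ≠ 0) : Module.finrank F F⟮α⟯ = 3 := by
  let f : Polynomial F := Polynomial.X ^ 3 + Polynomial.C p * Polynomial.X + Polynomial.C q
  have hdeg : f.natDegree = 3 := by simp only [f]; compute_degree!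
  have hmon : f.Monic := by simp only [f]; monicity!
  have hirr : Irreducible f := by
    rw [hmon.irreducible_iff_roots_eq_zero_of_degree_le_three (by omega) (by omega)]
    rw [Multiset.eq_zero_iff_forall_notMem]
    intro r hr
    rw [Polynomial.mem_roots hmon.ne_zero] at hr
    apply hno r
    simpa [f] using hr
  have hae : Polynomial.aeval α f = 0 := by simpa [f] using hα
  have hmin := minpoly.eq_of_irreducible_of_monic hirr hae hmon
  rw [adjoin.finrank ⟨f, hmon, by simpa [Polynomial.aeval_def] using hae⟩, ← hmin, hdeg]

/-- the derivative does not vanish -/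
theorem deriv_ne [CharZero F] {L : IntermediateField F E} (hL : Module.finrank F L = 3) {x : E}
    (hx : x ∈ L) (hxF : ∀ c : F, algebraMap F E c ≠ x) (p : F) :
    3 * x ^ 2 + algebraMap F E p ≠ 0 := by
  intro h
  have : x ^ 2 = algebraMap F E (-p / 3) := by
    have h3 : (3 : E) ≠ 0 := by
      have : algebraMap F E 3 ≠ 0 := (map_ne_zero _).2 (by norm_num)
      rwa [map_ofNat] at this
    rw [map_div₀, map_neg, map_ofNat, eq_div_iff h3]
    linear_combination h
  obtain ⟨c, hc⟩ := sq_mem_three hL this hx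
  exact hxF c hc

theorem roots_cases [CharZero E] {α p q d x : E} (hα : α ^ 3 + p * α + q = 0)
    (hd : d ^ 2 = -3 * α ^ 2 - 4 * p) (hx : x ^ 3 + p * x + q = 0) :
    x = α ∨ x = (-α + d) / 2 ∨ x = (-α - d) / 2 := by
  have e : (x - α) * ((x - (-α + d) / 2) * (x - (-α - d) / 2)) = 0 := by
    field_simp
    linear_combination 4 * hx - 4 * hα - (x - α) * hd
  rcases mul_eq_zero.1 e with h | h
  · left; linear_combination h
  · rcases mul_eq_zero.1 h with h | h
    · right; left; linear_combination h
    · right; right; linear_combination h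

theorem root_mem [CharZero E] (L : IntermediateField F E) {α p q d x : E}
    (hα : α ^ 3 + p * α + q = 0)
    (hd : d ^ 2 = -3 * α ^ 2 - 4 * p) (hx : x ^ 3 + p * x + q = 0)
    (hαL : α ∈ L) (hdL : d ∈ L) : x ∈ L := by
  rcases roots_cases hα hd hx with h | h | h <;> rw [h]
  · exact hαL
  · exact div_mem (add_mem (neg_mem hαL) hdL) (ofNat_mem' _ 2)
  · exact div_mem (sub_mem (neg_mem hαL) hdL) (ofNat_mem' _ 2)

theorem galois_of [CharZero F] [CharZero E] [Normal F E]
    {L : IntermediateField F E} (hL : Module.finrank F L = 3) {α d : E} {p q : F}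
    (hα : α ^ 3 + algebraMap F E p * α + algebraMap F E q = 0)
    (hd : d ^ 2 = -3 * α ^ 2 - 4 * algebraMap F E p)
    (hαL : α ∈ L) (hαF : ∀ c : F, algebraMap F E c ≠ α) (hdL : d ∈ L) : IsGalois F L := by
  have := fin_of_three hL
  have hN : Normal F L := by
    rw [normal_iff_forall_map_le]
    intro σ
    rw [← adjoin_eq_three hL hαL hαF, adjoin_map, Set.image_singleton, adjoin_simple_le_iff,
      adjoin_eq_three hL hαL hαF]
    refine root_mem L hα hd ?_ hαL hdL
    have := congrArg σ hα
    simpa using this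
  exact isGalois_iff.2 ⟨inferInstance, hN⟩

theorem d_mem [CharZero F] {L : IntermediateField F E} (hL : Module.finrank F L = 3) {α d : E} {p m : F}
    (hαL : α ∈ L) (hαF : ∀ c : F, algebraMap F E c ≠ α)
    (hm : algebraMap F E m = d * (3 * α ^ 2 + algebraMap F E p)) : d ∈ L := by
  rw [← div_eq_iff (deriv_ne hL hαL hαF p)] at hm
  rw [← hm]
  exact div_mem (IntermediateField.algebraMap_mem _ _) (add_mem (mul_mem (ofNat_mem' _ 3)
    (pow_mem hαL 2)) (IntermediateField.algebraMap_mem _ _))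

theorem case_one [CharZero F] [CharZero E] [Normal F E] [IsAlgClosed E]
    (hrep : ∀ (e : E) (D : F), e ^ 2 = algebraMap F E D →
      (∀ c : F, algebraMap F E c ≠ e) → ∀ x ∈ F⟮e⟯, x ≠ 0 → ∃ c a b : F, c ≠ 0 ∧
      x = algebraMap F E c * (algebraMap F E a + algebraMap F E b * e) ^ 3)
    {s : F} (hs : s ^ 2 = -3) (L : IntermediateField F E) (hL : Module.finrank F L = 3) :
    IsGalois F L := by
  obtain ⟨α, p, q, hαL, hαF, hα⟩ := exists_cubic hL
  obtain ⟨d, hd⟩ := IsAlgClosed.exists_pow_nat_eq (-3 * α ^ 2 - 4 * algebraMap F E p)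
    (by norm_num : 0 < 2)
  have h2 := disc_sq hα hd
  have hδ2 : (d * (3 * α ^ 2 + algebraMap F E p)) ^ 2
    = algebraMap F E (-4 * p ^ 3 - 27 * q ^ 2) := by rw [h2]; simp [map_ofNat]
  by_cases hδ : ∀ c : F, algebraMap F E c ≠ d * (3 * α ^ 2 + algebraMap F E p)
  · exact absurd (core hrep hs hα hd hδ) (not_mem_quad hL hαL hαF hδ2)
  · push Not at hδ
    obtain ⟨m, hm⟩ := hδ
    exact galois_of hL hα hd hαL hαF (d_mem hL hαL hαF hm)

end cubic

open IntermediateField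

section casetwo
variable {F E : Type*} [Field F] [Field E] [Algebra F E]

theorem no_root [CharZero F] {L : IntermediateField F E} (hL : Module.finrank F L = 3) {α : E}
    {p q : F} (hα : α ^ 3 + algebraMap F E p * α + algebraMap F E q = 0)
    (hαL : α ∈ L) (hαF : ∀ c : F, algebraMap F E c ≠ α) (r : F) : r ^ 3 + p * r + q ≠ 0 := by
  intro hr
  have hr' : (algebraMap F E r) ^ 3 + algebraMap F E p * algebraMap F E r + algebraMap F E q = 0 := by
    have := congrArg (algebraMap F E) hr
    simpa using this
  have e : (α - algebraMap F E r) * (α ^ 2 + algebraMap F E r * α + (algebraMap F E r) ^ 2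
    + algebraMap F E p) = 0 := by linear_combination hα - hr'
  rcases mul_eq_zero.1 e with h | h
  · exact hαF r (by linear_combination -h)
  · have h2 : (2 * α + algebraMap F E r) ^ 2 = algebraMap F E (-3 * r ^ 2 - 4 * p) := by
      simp only [map_sub, map_mul, map_pow, map_neg, map_ofNat]
      linear_combination 4 * h
    obtain ⟨c, hc⟩ := sq_mem_three hL h2 (add_mem (mul_mem (ofNat_mem' _ 2) hαL)
      (IntermediateField.algebraMap_mem _ _))
    apply hαF ((c - r) / 2)
    have h20 : (2 : E) ≠ 0 := by
      have : algebraMap F E 2 ≠ 0 := (map_ne_zero _).2 (by norm_num)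
      rwa [map_ofNat] at this
    rw [map_div₀, map_sub, hc, map_ofNat]
    field_simp; ring

theorem disc_F [CharZero F] {α d : E} {p q m : F}
    (hα : α ^ 3 + algebraMap F E p * α + algebraMap F E q = 0)
    (hd : d ^ 2 = -3 * α ^ 2 - 4 * algebraMap F E p)
    (hm : algebraMap F E m = d * (3 * α ^ 2 + algebraMap F E p)) :
    m ^ 2 = -4 * p ^ 3 - 27 * q ^ 2 := by
  apply (algebraMap F E).injective
  rw [map_pow, hm, disc_sq hα hd]
  simp [map_ofNat]

/-- uniqueness of the Galois cubic -/
theorem unique_galois [CharZero F] [CharZero E] {S : E} (hS : S ^ 2 = -3)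
    (hSF : ∀ c : F, algebraMap F E c ≠ S)
    {A B : F} (hker : ∀ a b z : F, z ≠ 0 → a ^ 2 - b ^ 2 * (-3) = z ^ 3 →
        ∃ i : ℕ, ∃ y ∈ F⟮S⟯, algebraMap F E a + algebraMap F E b * S
          = (algebraMap F E A + algebraMap F E B * S) ^ i * y ^ 3)
    {M : IntermediateField F E} (hM : Module.finrank F M = 3) {α₀ d₀ : E} (hα₀ : α₀ ∈ M)
    (hd₀ : d₀ ∈ M) (hβ : ((3 * α₀ + S * d₀) / 6) ^ 3 = algebraMap F E A + algebraMap F E B * S)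
    {L : IntermediateField F E} (hL : Module.finrank F L = 3) {α d : E} {p q m : F}
    (hα : α ^ 3 + algebraMap F E p * α + algebraMap F E q = 0)
    (hd : d ^ 2 = -3 * α ^ 2 - 4 * algebraMap F E p)
    (hm : algebraMap F E m = d * (3 * α ^ 2 + algebraMap F E p))
    (hαL : α ∈ L) (hαF : ∀ c : F, algebraMap F E c ≠ α) : L = M := by
  have hSE : S ^ 2 = algebraMap F E (-3) := by rw [hS]; simp [map_ofNat]
  have hdL : d ∈ L := d_mem hL hαL hαF hm
  have hm2 := disc_F hα hd hm
  have hp : p ≠ 0 := by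
    rintro rfl
    by_cases hq : q = 0
    · subst hq
      have : α = 0 := by simpa using hα
      exact hαF 0 (by simp [this])
    · have hqE : algebraMap F E q ≠ 0 := (map_ne_zero _).2 hq
      have hm3 : (algebraMap F E m) ^ 2 = -27 * (algebraMap F E q) ^ 2 := by
        have := congrArg (algebraMap F E) hm2
        simp only [map_sub, map_mul, map_pow, map_neg, map_ofNat, map_zero] at this
        linear_combination this
      have e : (algebraMap F E (m / (3 * q)) - S) * (algebraMap F E (-(m / (3 * q))) - S) = 0 := by
        simp only [map_neg, map_div₀, map_mul, map_ofNat]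
        field_simp
        linear_combination -hm3 + 9 * (algebraMap F E q) ^ 2 * hS
      rcases mul_eq_zero.1 e with h | h
      · exact hSF _ (sub_eq_zero.1 h)
      · exact hSF _ (sub_eq_zero.1 h)
  have hu := u_cube hS hα hd
  have huv := uv_mul hS hd
  rw [← hm] at hu
  set u := (3 * α + S * d) / 2 with hudef
  set v := (3 * α - S * d) / 2 with hvdef
  have huv0 : u * v ≠ 0 := by rw [huv]; simpa using hp
  have hu0 : u ≠ 0 := left_ne_zero_of_mul huv0
  obtain ⟨i, y, hy, hiy⟩ := hker (-27 * q / 2) (3 * m / 2) (-3 * p) (by simpa using hp) (by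
    field_simp
    linear_combination 27 * hm2)
  have hu3 : u ^ 3 = ((((3 * α₀ + S * d₀) / 6)) ^ i * y) ^ 3 := by
    rw [mul_pow, ← pow_mul, mul_comm i 3, pow_mul, hβ, ← hiy, hu]
    simp only [map_div₀, map_mul, map_neg, map_ofNat]; ring
  -- work over M
  have hSM : S ^ 2 = algebraMap M E (-3) := by rw [hS]; simp; rfl
  have hSnM : ∀ c : M, algebraMap M E c ≠ S := by
    intro c hc
    have : S ∈ M := by rw [← hc]; exact c.2
    obtain ⟨z, hz⟩ := sq_mem_three hM hSE this
    exact hSF z hz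
  have hMmem : ∀ x ∈ M, x ∈ (M⟮S⟯ : IntermediateField M E) := fun x hx =>
    IntermediateField.algebraMap_mem M⟮S⟯ (⟨x, hx⟩ : M)
  have hFmem : ∀ x : F, algebraMap F E x ∈ (M⟮S⟯ : IntermediateField M E) := fun x =>
    hMmem _ (IntermediateField.algebraMap_mem _ _)
  have hSmem : S ∈ (M⟮S⟯ : IntermediateField M E) := mem_adjoin_simple_self _ _
  have humem : u ∈ (M⟮S⟯ : IntermediateField M E) := by
    refine cube_mem _ hS hSmem ?_ hu3
    refine mul_mem (pow_mem (div_mem (add_mem (mul_mem (ofNat_mem' _ 3) (hMmem _ hα₀))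
      (mul_mem hSmem (hMmem _ hd₀))) (ofNat_mem' _ 6)) _) ?_
    obtain ⟨a, b, hab⟩ := (quad_mem hSE).1 hy
    rw [hab]
    exact add_mem (hFmem _) (mul_mem (hFmem _) hSmem)
  have hvmem : v ∈ (M⟮S⟯ : IntermediateField M E) := by
    have hv : v = -3 * algebraMap F E p / u := by rw [eq_div_iff hu0, mul_comm]; exact huv
    rw [hv]
    exact div_mem (mul_mem (neg_mem (ofNat_mem' _ 3)) (hFmem _)) humem
  have hαuv : α = (u + v) / 3 := by rw [hudef, hvdef]; field_simp; ring
  have hαmem : α ∈ (M⟮S⟯ : IntermediateField M E) := by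
    rw [hαuv]
    exact div_mem (add_mem humem hvmem) (ofNat_mem' _ 3)
  obtain ⟨x, y, hxy⟩ := (quad_mem hSM).1 hαmem
  have hpM : algebraMap F E p = algebraMap M E (algebraMap F M p) := rfl
  have hqM : algebraMap F E q = algebraMap M E (algebraMap F M q) := rfl
  have heq : algebraMap M E (x ^ 3 - 9 * x * y ^ 2 + algebraMap F M p * x + algebraMap F M q)
      + algebraMap M E (3 * x ^ 2 * y - 3 * y ^ 3 + algebraMap F M p * y) * S
      = algebraMap M E 0 + algebraMap M E 0 * S := by
    simp only [map_sub, map_add, map_mul, map_pow, map_ofNat, map_zero, ← hpM, ← hqM]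
    rw [hxy] at hα
    linear_combination hα - (3 * algebraMap M E x * (algebraMap M E y) ^ 2
      + (algebraMap M E y) ^ 3 * S) * hS
  obtain ⟨h1, h2⟩ := quad_unique hSnM heq
  by_cases hy0 : y = 0
  · have : α ∈ M := by rw [hxy, hy0]; simp
    rw [← adjoin_eq_three hL hαL hαF, adjoin_eq_three hM this hαF]
  · have h3 : 3 * x ^ 2 - 3 * y ^ 2 + algebraMap F M p = 0 := by
      apply mul_left_cancel₀ hy0
      linear_combination h2
    have hr : (-2 * x) ^ 3 + algebraMap F M p * (-2 * x) + algebraMap F M q = 0 := by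
      linear_combination h1 - 3 * x * h3
    have hrE := congrArg (algebraMap M E) hr
    simp only [map_add, map_mul, map_pow, map_zero, ← hpM, ← hqM] at hrE
    set r := algebraMap M E (-2 * x) with hrdef
    have hr1 : r ^ 3 + algebraMap F E p * r + algebraMap F E q = 0 := by
      rw [hrdef, map_mul]; exact hrE
    have hrM : r ∈ M := (-2 * x).2
    have hrL : r ∈ L := root_mem L hα hd hr1 hαL hdL
    have hrF : ∀ c : F, algebraMap F E c ≠ r := by
      intro c hc
      apply no_root hL hα hαL hαF c
      apply (algebraMap F E).injective
      rw [← hc] at hr1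
      simpa using hr1
    rw [← adjoin_eq_three hL hrL hrF, adjoin_eq_three hM hrM hrF]

/-- discriminant in F or S F -/
theorem disc_cases [CharZero F] [CharZero E] {S : E} (hS : S ^ 2 = -3)
    (hSF : ∀ c : F, algebraMap F E c ≠ S)
    (hrep : ∀ (e : E) (D : F⟮S⟯), e ^ 2 = algebraMap F⟮S⟯ E D →
      (∀ c : F⟮S⟯, algebraMap F⟮S⟯ E c ≠ e) → ∀ x ∈ F⟮S⟯⟮e⟯, x ≠ 0 → ∃ c a b : F⟮S⟯, c ≠ 0 ∧
      x = algebraMap F⟮S⟯ E c * (algebraMap F⟮S⟯ E a + algebraMap F⟮S⟯ E b * e) ^ 3)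
    {L : IntermediateField F E} (hL : Module.finrank F L = 3) {α d : E} {p q : F}
    (hα : α ^ 3 + algebraMap F E p * α + algebraMap F E q = 0)
    (hd : d ^ 2 = -3 * α ^ 2 - 4 * algebraMap F E p)
    (hαL : α ∈ L) (hαF : ∀ c : F, algebraMap F E c ≠ α) :
    ∃ m : F, algebraMap F E m = d * (3 * α ^ 2 + algebraMap F E p) ∨
      algebraMap F E m * S = d * (3 * α ^ 2 + algebraMap F E p) := by
  have hSE : S ^ 2 = algebraMap F E (-3) := by rw [hS]; simp [map_ofNat]
  have h2 := disc_sq hα hd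
  have hδ2 : (d * (3 * α ^ 2 + algebraMap F E p)) ^ 2
    = algebraMap F E (-4 * p ^ 3 - 27 * q ^ 2) := by rw [h2]; simp [map_ofNat]
  by_cases hδ : ∀ c : F⟮S⟯, algebraMap F⟮S⟯ E c ≠ d * (3 * α ^ 2 + algebraMap F E p)
  · exfalso
    have hc := core (F := F⟮S⟯) hrep (s := ⟨S, mem_adjoin_simple_self _ _⟩)
      (p := algebraMap F F⟮S⟯ p) (q := algebraMap F F⟮S⟯ q)
      (by ext; simp [hS]; rfl) hα hd hδ
    change α ∈ F⟮S⟯⟮d * (3 * α ^ 2 + algebraMap F E p)⟯ at hc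
    have hδ2' : (d * (3 * α ^ 2 + algebraMap F E p)) ^ 2
      = algebraMap F⟮S⟯ E (algebraMap F F⟮S⟯ (-4 * p ^ 3 - 27 * q ^ 2)) := hδ2
    have hf := quad_finrank hδ2' hδ
    have hf0 := quad_finrank hSE hSF
    set N := F⟮S⟯⟮d * (3 * α ^ 2 + algebraMap F E p)⟯
    have hα' : α ∈ N.restrictScalars F := hc
    have h4 : Module.finrank F (N.restrictScalars F) = 4 := by
      have := Module.finrank_mul_finrank F F⟮S⟯ N
      rw [hf, hf0] at this
      exact this.symm
    have h5 := finrank_dvd_of_le_right (adjoin_simple_le_iff.2 hα')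
    rw [adjoin_eq_three hL hαL hαF, hL, h4] at h5
    omega
  · push Not at hδ
    obtain ⟨c, hc⟩ := hδ
    obtain ⟨a, b, hab⟩ := (quad_mem hSE).1 c.2
    have hab' : d * (3 * α ^ 2 + algebraMap F E p) = algebraMap F E a + algebraMap F E b * S := by
      rw [← hc]; exact hab
    rw [hab'] at hδ2 ⊢
    have h3 : algebraMap F E (a ^ 2 - 3 * b ^ 2) + algebraMap F E (2 * a * b) * S
      = algebraMap F E (-4 * p ^ 3 - 27 * q ^ 2) + algebraMap F E 0 * S := by
      rw [← hδ2]
      simp only [map_sub, map_mul, map_pow, map_ofNat, map_zero]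
      linear_combination -(algebraMap F E b) ^ 2 * hS
    have h4 := (quad_unique hSF h3).2
    have h5 : a * b = 0 := by
      have : (2:F) * (a * b) = 0 := by linear_combination h4
      simpa using this
    rcases mul_eq_zero.1 h5 with h | h
    · exact ⟨b, Or.inr (by simp [h])⟩
    · exact ⟨a, Or.inl (by simp [h])⟩

theorem pure_cubic [CharZero F] [CharZero E] {S : E} (hS : S ^ 2 = -3)
    {π : F} (hπ0 : π ≠ 0)
    (hall : ∀ x : F, x ≠ 0 → ∃ i : ℕ, i < 3 ∧ ∃ y : F, x = π ^ i * y ^ 3)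
    {L : IntermediateField F E} (hL : Module.finrank F L = 3) {α t : E} {m : F}
    (hαL : α ∈ L) (hαF : ∀ c : F, algebraMap F E c ≠ α) (ht0 : t ≠ 0)
    (ht : t ^ 3 = algebraMap F E m) (hαt : α ∈ F⟮t⟯) :
    ∃ x : E, x ^ 3 = algebraMap F E π ∧ α ∈ F⟮x⟯ := by
  have hSE : S ^ 2 = algebraMap F E (-3) := by rw [hS]; simp [map_ofNat]
  have hm : m ≠ 0 := by
    rintro rfl
    exact ht0 (by simpa using ht)
  have hπE : algebraMap F E π ≠ 0 := (map_ne_zero _).2 hπ0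
  obtain ⟨i, hi, y, hy⟩ := hall m hm
  have hy0 : y ≠ 0 := by
    rintro rfl; apply hm; rw [hy]; simp
  have hyE : algebraMap F E y ≠ 0 := (map_ne_zero _).2 hy0
  have ht' : t ^ 3 = (algebraMap F E π) ^ i * (algebraMap F E y) ^ 3 := by rw [ht, hy]; simp
  have key : ∀ x : E, t ∈ F⟮x⟯ → α ∈ F⟮x⟯ := fun x hx => (adjoin_simple_le_iff.2 hx) hαt
  interval_cases i
  · exfalso
    refine not_mem_quad hL hαL hαF hSE (key S ?_)
    exact cube_mem _ hS (mem_adjoin_simple_self _ _) (IntermediateField.algebraMap_mem _ y)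
      (by rw [ht']; simp)
  · refine ⟨t / algebraMap F E y, ?_, key _ ?_⟩
    · rw [div_pow, ht']; field_simp
    · have := mul_mem (mem_adjoin_simple_self F (t / algebraMap F E y))
        (IntermediateField.algebraMap_mem _ y)
      rwa [div_mul_cancel₀ _ hyE] at this
  · refine ⟨algebraMap F E (π * y) / t, ?_, key _ ?_⟩
    · rw [div_pow, ht', map_mul]; field_simp
    · have := div_mem (IntermediateField.algebraMap_mem F⟮algebraMap F E (π * y) / t⟯ (π * y))
        (mem_adjoin_simple_self F (algebraMap F E (π * y) / t))
      rwa [div_div_cancel₀ ((map_ne_zero _).2 (mul_ne_zero hπ0 hy0))] at this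

theorem not_both [CharZero F] [CharZero E] {S : E} (hS : S ^ 2 = -3)
    (hSF : ∀ c : F, algebraMap F E c ≠ S)
    {L : IntermediateField F E} (hL : Module.finrank F L = 3) {x y : E} (hx0 : x ≠ 0)
    (hxy : x ^ 3 = y ^ 3) (hne : x ≠ y) (hx : x ∈ L) (hy : y ∈ L) : False := by
  have hSE : S ^ 2 = algebraMap F E (-3) := by rw [hS]; simp [map_ofNat]
  have hy0 : y ≠ 0 := by rintro rfl; exact hx0 (by simpa using hxy)
  have hSL : S ∈ L := by
    rcases cube_eq_cases hS hxy with h | h | h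
    · exact absurd h hne
    · have : S = 2 * (x / y) + 1 := by rw [h]; field_simp; ring
      rw [this]; exact add_mem (mul_mem (ofNat_mem' _ 2) (div_mem hx hy)) (one_mem _)
    · have : S = -(2 * (x / y) + 1) := by rw [h]; field_simp; ring
      rw [this]; exact neg_mem (add_mem (mul_mem (ofNat_mem' _ 2) (div_mem hx hy)) (one_mem _))
  obtain ⟨c, hc⟩ := sq_mem_three hL hSE hSL
  exact hSF c hc

theorem pure_finrank {π : F} (hπ : ∀ y : F, y ^ 3 ≠ π) {x : E} (hx : x ^ 3 = algebraMap F E π) :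
    Module.finrank F F⟮x⟯ = 3 :=
  cubic_finrank (p := 0) (q := -π) (by simp [hx]) (fun r h => hπ r (by linear_combination h))

theorem pure_conj {π : F} (hπ : ∀ y : F, y ^ 3 ≠ π) {x y : E} (hx : x ^ 3 = algebraMap F E π)
    (hy : y ^ 3 = algebraMap F E π) : minpoly F x = minpoly F y := by
  have hirr := X_pow_sub_C_irreducible_of_prime Nat.prime_three (a := π) hπ
  have hmon := Polynomial.monic_X_pow_sub_C π (by norm_num : 3 ≠ 0)
  rw [← minpoly.eq_of_irreducible_of_monic hirr (x := x) (by simp [hx]) hmon,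
    ← minpoly.eq_of_irreducible_of_monic hirr (x := y) (by simp [hy]) hmon]

theorem omega_facts [CharZero E] {S : E} (hS : S ^ 2 = -3) :
    ((-1 + S) / 2) ^ 3 = 1 ∧ ((-1 - S) / 2) ^ 3 = 1 ∧ (-1 + S) / 2 ≠ 1 ∧ (-1 - S) / 2 ≠ 1 ∧
      (-1 + S) / 2 ≠ (-1 - S) / 2 := by
  have h9 : (9 : E) ≠ -3 := by norm_num
  refine ⟨?_, ?_, ?_, ?_, ?_⟩
  · field_simp; linear_combination (S - 3) * hS
  · field_simp; linear_combination (-S - 3) * hS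
  · intro h
    have : S = 3 := by field_simp at h; linear_combination h
    rw [this] at hS; norm_num at hS
  · intro h
    have : S = -3 := by field_simp at h; linear_combination -h
    rw [this] at hS; norm_num at hS
  · intro h
    have : S = 0 := by
      field_simp at h
      have : 2 * S = 0 := by linear_combination h
      simpa using this
    rw [this] at hS; norm_num at hS

theorem pure_not_galois [CharZero F] [CharZero E] [Normal F E] {S : E} (hS : S ^ 2 = -3)
    (hSF : ∀ c : F, algebraMap F E c ≠ S) {π : F} (hπ0 : π ≠ 0) (hπ : ∀ y : F, y ^ 3 ≠ π) {x : E}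
    (hx : x ^ 3 = algebraMap F E π) : ¬ IsGalois F F⟮x⟯ := by
  intro hG
  obtain ⟨w1, -, w3, -, -⟩ := omega_facts hS
  have hx0 : x ≠ 0 := by
    rintro rfl
    have : algebraMap F E π ≠ 0 := (map_ne_zero _).2 hπ0
    exact this (by rw [← hx]; simp)
  have hy : ((-1 + S) / 2 * x) ^ 3 = algebraMap F E π := by rw [mul_pow, w1, one_mul, hx]
  have hc : IsConjRoot F x ((-1 + S) / 2 * x) := pure_conj hπ hx hy
  obtain ⟨σ, hσ⟩ := isConjRoot_iff_exists_algEquiv.1 hc.symm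
  have hN : Normal F F⟮x⟯ := hG.to_normal
  have hle := normal_iff_forall_map_le'.1 hN σ
  have hmem : (-1 + S) / 2 * x ∈ F⟮x⟯ := by
    apply hle
    exact ⟨x, mem_adjoin_simple_self F x, hσ⟩
  refine not_both hS hSF (pure_finrank hπ hx) hx0 (hx.trans hy.symm) ?_
    (mem_adjoin_simple_self F x) hmem
  intro h
  apply w3
  apply mul_right_cancel₀ hx0
  rw [one_mul]; exact h.symm

theorem exists_galois [CharZero F] [CharZero E] [IsAlgClosed E]
    {S : E} (hS : S ^ 2 = -3) (hSF : ∀ c : F, algebraMap F E c ≠ S)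
    {A B c : F} (hc0 : c ≠ 0) (hc : A ^ 2 - B ^ 2 * (-3) = c ^ 3)
    (hnc : ∀ y ∈ F⟮S⟯, y ^ 3 ≠ algebraMap F E A + algebraMap F E B * S) :
    ∃ α₀ d₀ : E, Module.finrank F F⟮α₀⟯ = 3 ∧ d₀ ∈ F⟮α₀⟯ ∧
      α₀ ^ 3 + algebraMap F E (-3 * c) * α₀ + algebraMap F E (-2 * A) = 0 ∧
      d₀ ^ 2 = -3 * α₀ ^ 2 - 4 * algebraMap F E (-3 * c) ∧
      (∀ r : F, algebraMap F E r ≠ α₀) ∧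
      ((3 * α₀ + S * d₀) / 6) ^ 3 = algebraMap F E A + algebraMap F E B * S := by
  have hSE : S ^ 2 = algebraMap F E (-3) := by rw [hS]; simp [map_ofNat]
  have hSK : S ∈ F⟮S⟯ := mem_adjoin_simple_self _ _
  obtain ⟨w1, w2, -, -, -⟩ := omega_facts hS
  have hS0 : S ≠ 0 := by rintro rfl; norm_num at hS
  obtain ⟨β, hβ⟩ := IsAlgClosed.exists_pow_nat_eq (algebraMap F E A + algebraMap F E B * S)
    (by norm_num : 0 < 3)
  have hβ0 : β ≠ 0 := by
    rintro rfl
    exact hnc 0 (zero_mem _) hβ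
  have hcE : (algebraMap F E A) ^ 2 + 3 * (algebraMap F E B) ^ 2 = (algebraMap F E c) ^ 3 := by
    have := congrArg (algebraMap F E) hc
    simp only [map_sub, map_mul, map_pow, map_neg, map_ofNat] at this
    linear_combination this
  obtain ⟨γ, hγ⟩ : ∃ γ : E, γ = algebraMap F E c / β := ⟨_, rfl⟩
  have hβγ : β * γ = algebraMap F E c := by rw [hγ]; field_simp
  have hγ3 : γ ^ 3 = algebraMap F E A - algebraMap F E B * S := by
    apply mul_left_cancel₀ (pow_ne_zero 3 hβ0)
    rw [← mul_pow, hβγ, hβ, ← hcE]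
    linear_combination (algebraMap F E B) ^ 2 * hS
  have hroot : (β + γ) ^ 3 + algebraMap F E (-3 * c) * (β + γ) + algebraMap F E (-2 * A) = 0 := by
    simp only [map_mul, map_neg, map_ofNat]
    linear_combination hβ + hγ3 + 3 * (β + γ) * hβγ
  have hno : ∀ r : F, r ^ 3 + (-3 * c) * r + (-2 * A) ≠ 0 := by
    intro r hr
    have hrE : (algebraMap F E r) ^ 3 - 3 * algebraMap F E c * algebraMap F E r
        - 2 * algebraMap F E A = 0 := by
      have := congrArg (algebraMap F E) hr
      simp only [map_add, map_mul, map_pow, map_neg, map_ofNat, map_zero] at this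
      linear_combination this
    -- a cube root β₁ of b with r = β₁ + c / β₁
    have key : ∀ β₁ : E, β₁ ^ 3 = algebraMap F E A + algebraMap F E B * S →
        β₁ ^ 2 - algebraMap F E r * β₁ + algebraMap F E c = 0 → False := by
      intro β₁ h1 h2
      have h3 : (algebraMap F E (r ^ 2 - c)) * β₁ =
          algebraMap F E A + algebraMap F E B * S + algebraMap F E (r * c) := by
        simp only [map_sub, map_mul, map_pow]
        linear_combination h1 - (β₁ + algebraMap F E r) * h2
      by_cases hz : r ^ 2 - c = 0
      · refine hnc (algebraMap F E (-r)) (IntermediateField.algebraMap_mem _ _) ?_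
        have hc' : algebraMap F E (r * c) = (algebraMap F E r) ^ 3 := by
          rw [← map_pow]; congr 1; linear_combination -r * hz
        rw [hz, map_zero, zero_mul, hc'] at h3
        rw [map_neg]
        linear_combination h3
      · refine hnc β₁ ?_ h1
        rw [mul_comm, ← eq_div_iff ((map_ne_zero _).2 hz)] at h3
        rw [h3]
        exact div_mem (add_mem (add_mem (IntermediateField.algebraMap_mem _ _)
          (mul_mem (IntermediateField.algebraMap_mem _ _) hSK))
          (IntermediateField.algebraMap_mem _ _)) (IntermediateField.algebraMap_mem _ _)
    have hrel : (-1 + S) / 2 * ((-1 - S) / 2) = (1 : E) := by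
      field_simp; linear_combination -hS
    have hsum : (-1 + S) / 2 + ((-1 - S) / 2) = (-1 : E) := by
      field_simp; ring
    generalize (-1 + S) / 2 = w at *
    generalize (-1 - S) / 2 = w' at *
    have hfac : (algebraMap F E r - (β + γ)) * ((algebraMap F E r - (w * β + w' * γ)) *
        (algebraMap F E r - (w' * β + w * γ))) = 0 := by
      have e1 : (algebraMap F E r - (w * β + w' * γ)) * (algebraMap F E r - (w' * β + w * γ))
        = (algebraMap F E r) ^ 2 + algebraMap F E r * (β + γ) + β ^ 2 + γ ^ 2 - β * γ := by
        linear_combination (-algebraMap F E r * (β + γ)  + β * γ * (w + w' - 1)) * hsum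
          + (β ^ 2 + γ ^ 2 - 2 * β * γ) * hrel
      rw [e1]
      linear_combination hrE - hβ - hγ3 - 3 * algebraMap F E r * hβγ
    rcases mul_eq_zero.1 hfac with h | h
    · exact key β hβ (by linear_combination -β * h + -hβγ)
    · rcases mul_eq_zero.1 h with h | h
      · refine key (w * β) (by rw [mul_pow, w1, one_mul, hβ]) ?_
        linear_combination -w * β * h - β * γ * hrel - hβγ
      · refine key (w' * β) (by rw [mul_pow, w2, one_mul, hβ]) ?_
        linear_combination -w' * β * h - β * γ * hrel - hβγ
  have hfr := cubic_finrank hroot hno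
  have hd : (3 * (β - γ) / S) ^ 2 = -3 * (β + γ) ^ 2 - 4 * algebraMap F E (-3 * c) := by
    rw [div_pow, hS]
    simp only [map_mul, map_neg, map_ofNat]
    field_simp
    linear_combination 4 * hβγ
  have hF : ∀ r : F, algebraMap F E r ≠ β + γ := by
    intro r hr
    apply hno r
    apply (algebraMap F E).injective
    rw [← hr] at hroot
    simp only [map_add, map_mul, map_pow, map_zero]
    simpa using hroot
  have hself : β + γ ∈ F⟮β + γ⟯ := mem_adjoin_simple_self _ _
  refine ⟨β + γ, 3 * (β - γ) / S, hfr, ?_, hroot, hd, hF, ?_⟩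
  · refine d_mem (p := -3 * c) (m := 18 * B) hfr hself hF ?_
    simp only [map_mul, map_neg, map_ofNat]
    field_simp
    linear_combination 9 * hγ3 - 9 * hβ - 9 * (β - γ) * hβγ
  · rw [← hβ]; congr 1; field_simp; ring

theorem case_two [CharZero F] [CharZero E] [Normal F E] [IsAlgClosed E] {S : E} (hS : S ^ 2 = -3)
    (hSF : ∀ c : F, algebraMap F E c ≠ S)
    (h1 : (powMonoidHom 3 : Fˣ →* Fˣ).range.index = 3)
    (h2 : (powMonoidHom 3 : F⟮S⟯ˣ →* F⟮S⟯ˣ).range.index = 9)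
    (hrep : ∀ (e : E) (D : F⟮S⟯), e ^ 2 = algebraMap F⟮S⟯ E D →
      (∀ c : F⟮S⟯, algebraMap F⟮S⟯ E c ≠ e) → ∀ x ∈ F⟮S⟯⟮e⟯, x ≠ 0 → ∃ c a b : F⟮S⟯, c ≠ 0 ∧
      x = algebraMap F⟮S⟯ E c * (algebraMap F⟮S⟯ E a + algebraMap F⟮S⟯ E b * e) ^ 3) :
    Nat.card {L : IntermediateField F E // Module.finrank F L = 3} = 4 ∧
      Nat.card {L : IntermediateField F E // Module.finrank F L = 3 ∧ IsGalois F L} = 1 := by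
  have hSE : S ^ 2 = algebraMap F E (-3) := by rw [hS]; simp [map_ofNat]
  obtain ⟨π, hπ0, hπ, hall⟩ := base_three h1
  obtain ⟨A, B, c, hc0, hc, hnc, hker⟩ := ker_three hSE hSF h1 h2
  obtain ⟨α₀, d₀, hM, hd₀M, hα₀, hd₀, hα₀F, hβ⟩ := exists_galois hS hSF hc0 hc hnc
  obtain ⟨ρ, hρ⟩ := IsAlgClosed.exists_pow_nat_eq (algebraMap F E π) (by norm_num : 0 < 3)
  obtain ⟨w1, w2, w3, w4, w5⟩ := omega_facts hS
  have hρ0 : ρ ≠ 0 := by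
    rintro rfl
    have : algebraMap F E π ≠ 0 := (map_ne_zero _).2 hπ0
    exact this (by rw [← hρ]; simp)
  have hMG : IsGalois F F⟮α₀⟯ :=
    galois_of hM hα₀ hd₀ (mem_adjoin_simple_self _ _) hα₀F hd₀M
  have hclass : ∀ L : IntermediateField F E, Module.finrank F L = 3 →
      L = F⟮α₀⟯ ∨ ∃ x : E, x ^ 3 = algebraMap F E π ∧ L = F⟮x⟯ := by
    intro L hL
    obtain ⟨α, p, q, hαL, hαF, hα⟩ := exists_cubic hL
    obtain ⟨d, hd⟩ := IsAlgClosed.exists_pow_nat_eq (-3 * α ^ 2 - 4 * algebraMap F E p)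
      (by norm_num : 0 < 2)
    obtain ⟨m, hm | hm⟩ := disc_cases hS hSF hrep hL hα hd hαL hαF
    · left
      exact unique_galois hS hSF hker hM (mem_adjoin_simple_self _ _) hd₀M hβ hL hα hd hm hαL hαF
    · right
      have hu := u_cube hS hα hd
      have hu' := u_cube (S := -S) (by rw [neg_sq, hS]) hα hd
      have huv := uv_mul hS hd
      rw [← hm] at hu hu'
      have hα0 : α ≠ 0 := by rintro rfl; exact hαF 0 (by simp)
      have hex : ∃ (t : E) (m : F), t ≠ 0 ∧ t ^ 3 = algebraMap F E m ∧ α ∈ F⟮t⟯ := by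
        by_cases hu0 : (3 * α + S * d) / 2 = 0
        · refine ⟨3 * α, -27 * q / 2 + 9 * m / 2, by simpa using hα0, ?_, ?_⟩
          · have : 3 * α = (3 * α + -S * d) / 2 := by
              field_simp at hu0 ⊢; linear_combination hu0
            rw [this, hu']
            simp only [map_add, map_div₀, map_mul, map_neg, map_ofNat]
            linear_combination -(3 / 2 : E) * algebraMap F E m * hS
          · have := div_mem (mem_adjoin_simple_self F (3 * α)) (ofNat_mem' _ 3)
            rwa [mul_div_cancel_left₀ _ (by norm_num : (3:E) ≠ 0)] at this
        · refine ⟨(3 * α + S * d) / 2, -27 * q / 2 - 9 * m / 2, hu0, ?_, ?_⟩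
          · rw [hu]
            simp only [map_sub, map_div₀, map_mul, map_neg, map_ofNat]
            linear_combination (3 / 2 : E) * algebraMap F E m * hS
          · generalize hu_def : (3 * α + S * d) / 2 = u at *
            have e : α = (u + -3 * algebraMap F E p / u) / 3 := by
              rw [← huv]; field_simp; rw [← hu_def]; ring
            have hself := mem_adjoin_simple_self F u
            have hmem : (u + -3 * algebraMap F E p / u) / 3 ∈ F⟮u⟯ :=
              div_mem (add_mem hself (div_mem (mul_mem (neg_mem (ofNat_mem' _ 3))
                (IntermediateField.algebraMap_mem _ _)) hself)) (ofNat_mem' _ 3)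
            rw [← e] at hmem
            exact hmem
      obtain ⟨t, m', ht0, ht, hαt⟩ := hex
      obtain ⟨x, hx, hαx⟩ := pure_cubic hS hπ0 hall hL hαL hαF ht0 ht hαt
      refine ⟨x, hx, ?_⟩
      rw [← adjoin_eq_three hL hαL hαF, adjoin_eq_three (pure_finrank hπ hx) hαx hαF]
  have hng : ∀ x : E, x ^ 3 = algebraMap F E π → F⟮x⟯ ≠ F⟮α₀⟯ := by
    intro x hx h
    apply pure_not_galois hS hSF hπ0 hπ hx
    rw [h]; exact hMG
  have hdist : ∀ x y : E, x ^ 3 = algebraMap F E π → y ^ 3 = algebraMap F E π → x ≠ y →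
      F⟮x⟯ ≠ F⟮y⟯ := by
    intro x y hx hy hne h
    have hx0 : x ≠ 0 := by
      rintro rfl
      have : algebraMap F E π ≠ 0 := (map_ne_zero _).2 hπ0
      exact this (by rw [← hx]; simp)
    refine not_both hS hSF (pure_finrank hπ hx) hx0 (hx.trans hy.symm) hne
      (mem_adjoin_simple_self F x) ?_
    rw [h]; exact mem_adjoin_simple_self F y
  have hρ1 : ((-1 + S) / 2 * ρ) ^ 3 = algebraMap F E π := by rw [mul_pow, w1, one_mul, hρ]
  have hρ2 : ((-1 - S) / 2 * ρ) ^ 3 = algebraMap F E π := by rw [mul_pow, w2, one_mul, hρ]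
  constructor
  · have hset : {L : IntermediateField F E | Module.finrank F L = 3}
        = {F⟮α₀⟯, F⟮ρ⟯, F⟮(-1 + S) / 2 * ρ⟯, F⟮(-1 - S) / 2 * ρ⟯} := by
      ext L
      simp only [Set.mem_ofPred_eq, Set.mem_insert_iff, Set.mem_singleton_iff]
      constructor
      · intro hL
        rcases hclass L hL with h | ⟨x, hx, rfl⟩
        · exact Or.inl h
        · rcases cube_eq_cases hS (hx.trans hρ.symm) with h | h | h <;> simp [h]
      · rintro (rfl | rfl | rfl | rfl)
        · exact hM
        · exact pure_finrank hπ hρ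
        · exact pure_finrank hπ hρ1
        · exact pure_finrank hπ hρ2
    have : Nat.card {L : IntermediateField F E // Module.finrank F L = 3}
        = Set.ncard {L : IntermediateField F E | Module.finrank F L = 3} := rfl
    rw [this, hset]
    have n1 : ρ ≠ (-1 + S) / 2 * ρ := fun h => w3 (mul_right_cancel₀ hρ0 (by rw [one_mul]; exact h.symm))
    have n2 : ρ ≠ (-1 - S) / 2 * ρ := fun h => w4 (mul_right_cancel₀ hρ0 (by rw [one_mul]; exact h.symm))
    have n3 : (-1 + S) / 2 * ρ ≠ (-1 - S) / 2 * ρ := fun h => w5 (mul_right_cancel₀ hρ0 h)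
    rw [Set.ncard_insert_of_notMem, Set.ncard_insert_of_notMem, Set.ncard_pair]
    · exact hdist _ _ hρ1 hρ2 n3
    · simp only [Set.mem_insert_iff, Set.mem_singleton_iff, not_or]
      exact ⟨hdist _ _ hρ hρ1 n1, hdist _ _ hρ hρ2 n2⟩
    · simp only [Set.mem_insert_iff, Set.mem_singleton_iff, not_or]
      exact ⟨(hng _ hρ).symm, (hng _ hρ1).symm, (hng _ hρ2).symm⟩
  · rw [Nat.card_eq_one_iff_unique]
    refine ⟨⟨?_⟩, ⟨⟨F⟮α₀⟯, hM, hMG⟩⟩⟩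
    have : ∀ L : IntermediateField F E, Module.finrank F L = 3 → IsGalois F L → L = F⟮α₀⟯ := by
      intro L hL hG
      rcases hclass L hL with h | ⟨x, hx, rfl⟩
      · exact h
      · exact absurd hG (pure_not_galois hS hSF hπ0 hπ hx)
    rintro ⟨L, hL, hG⟩ ⟨L', hL', hG'⟩
    exact Subtype.ext ((this L hL hG).trans (this L' hL' hG').symm)

end casetwo

theorem rep_padic (p : ℕ) [Fact p.Prime] (hp : p ≠ 3) (F : Type*) [Field F] [Algebra ℚ_[p] F]
    [FiniteDimensional ℚ_[p] F] [CharZero F] (E : Type*) [Field E] [Algebra F E]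
    {s : F} (hs : s ^ 2 = -3) (e : E) (D : F) (he : e ^ 2 = algebraMap F E D)
    (hne : ∀ c : F, algebraMap F E c ≠ e) : ∀ x ∈ F⟮e⟯, x ≠ 0 → ∃ c a b : F, c ≠ 0 ∧
      x = algebraMap F E c * (algebraMap F E a + algebraMap F E b * e) ^ 3 := by
  let _ : Algebra ℚ_[p] F⟮e⟯ := ((algebraMap F F⟮e⟯).comp (algebraMap ℚ_[p] F)).toAlgebra
  have : IsScalarTower ℚ_[p] F F⟮e⟯ := IsScalarTower.of_algebraMap_eq (fun _ => rfl)
  have : FiniteDimensional F F⟮e⟯ := adjoin.finiteDimensional (quad_integral he)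
  have : FiniteDimensional ℚ_[p] F⟮e⟯ := FiniteDimensional.trans ℚ_[p] F F⟮e⟯
  have : CharZero F⟮e⟯ := charZero_of_injective_algebraMap (algebraMap F F⟮e⟯).injective
  have h1 := cube_index_padic p hp F
  rw [ker_card_three hs] at h1
  have h2 := cube_index_padic p hp F⟮e⟯
  rw [ker_card_three (s := algebraMap F F⟮e⟯ s) (by rw [← map_pow, hs]; simp [map_ofNat])] at h2
  exact cube_rep he hne h1 h2

theorem part_two (p : ℕ) [Fact p.Prime] (hp : p ≠ 3)
    (F : Type*) [Field F] [Algebra ℚ_[p] F] [FiniteDimensional ℚ_[p] F] [CharZero F]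
    (E : Type*) [Field E] [Algebra F E] [CharZero E] [Normal F E] [IsAlgClosed E]
    (hs : ∀ s : F, s ^ 2 ≠ -3) :
      Nat.card {L : IntermediateField F E // Module.finrank F L = 3} = 4 ∧
      Nat.card {L : IntermediateField F E // Module.finrank F L = 3 ∧ IsGalois F L} = 1 := by
  obtain ⟨S, hS⟩ := IsAlgClosed.exists_pow_nat_eq (-3 : E)
    (by norm_num : 0 < 2)
  have hSE : S ^ 2 = algebraMap F E (-3) := by rw [hS]; simp [map_ofNat]
  have hSF : ∀ c : F, algebraMap F E c ≠ S := by
    intro c hc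
    apply hs c
    apply (algebraMap F E).injective
    rw [map_pow, hc, hSE]
  have h1 := cube_index_padic p hp F
  rw [ker_card_one hs] at h1
  let _ : Algebra ℚ_[p] F⟮S⟯ := ((algebraMap F F⟮S⟯).comp (algebraMap ℚ_[p] F)).toAlgebra
  have : IsScalarTower ℚ_[p] F F⟮S⟯ := IsScalarTower.of_algebraMap_eq (fun _ => rfl)
  have : FiniteDimensional F F⟮S⟯ := adjoin.finiteDimensional (quad_integral hSE)
  have : FiniteDimensional ℚ_[p] F⟮S⟯ := FiniteDimensional.trans ℚ_[p] F F⟮S⟯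
  have hK0 : CharZero F⟮S⟯ := charZero_of_injective_algebraMap (algebraMap F F⟮S⟯).injective
  have hsK : (⟨S, mem_adjoin_simple_self F S⟩ : F⟮S⟯) ^ 2 = -3 := by
    ext; simp [hS]; rfl
  have h2 := cube_index_padic p hp F⟮S⟯
  rw [ker_card_three hsK] at h2
  exact case_two hS hSF h1 h2 (rep_padic p hp F⟮S⟯ E hsK)

theorem stmt19 (p : ℕ) [Fact p.Prime] (hp : p ≠ 3)
    (F : Type*) [Field F] [Algebra ℚ_[p] F] [FiniteDimensional ℚ_[p] F] :
    ((∃ ζ : F, IsPrimitiveRoot ζ 3) →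
      ∀ L : IntermediateField F (AlgebraicClosure F),
        Module.finrank F L = 3 → IsGalois F L) ∧
    ((¬ ∃ ζ : F, IsPrimitiveRoot ζ 3) →
      Nat.card {L : IntermediateField F (AlgebraicClosure F) //
          Module.finrank F L = 3} = 4 ∧
      Nat.card {L : IntermediateField F (AlgebraicClosure F) //
          Module.finrank F L = 3 ∧ IsGalois F L} = 1) := by
  have hF0 : CharZero F := charZero_of_injective_algebraMap (algebraMap ℚ_[p] F).injective
  have hE0 : CharZero (AlgebraicClosure F) :=
    charZero_of_injective_algebraMap (algebraMap F (AlgebraicClosure F)).injective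
  constructor
  · rintro ⟨ζ, hζ⟩ L hL
    have hs := sqrt_of_prim hζ
    exact case_one (rep_padic p hp F (AlgebraicClosure F) hs) hs L hL
  · intro hno
    have hs : ∀ s : F, s ^ 2 ≠ -3 := fun s hs => hno ⟨_, prim_of_sqrt hs⟩
    exact part_two p hp F (AlgebraicClosure F) hs
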